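/- arXiv:0911.4199 — 11 statements merged into one kernel-verified Lean document; each statement's English description precedes it below -/
import Mathlib

section
/- If G is an r-regular finite simple graph on n vertices with r ≥ 1, then χ₂(G) − χ(G) ≤ 2·⌈n/r⌉ − 2. -/
/-!
Let `c` be a proper coloring with `χ` colors and let `S` be a maximal set of vertices whose
neighborhoods are pairwise disjoint and monochromatic under `c`. Disjointness gives
`|S| * r ≤ n`. For each `s ∈ S` introduce two new colors; give the first to one chosen neighbor of
`s` and the second to all its other neighbors. Each `N(s)` is independent, being monochromatic
under `c`, so the result is again proper. It is dynamic when `r ≥ 2`: a neighborhood `N(v)` meeting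
some `N(s)` either leaves `N(s)`, and then sees a color not used on `N(s)`, or equals `N(s)` by
regularity, and then sees both new colors; a neighborhood meeting no `N(s)` keeps its old colors,
which are not all equal by maximality of `S` (`exists_dynamic_recoloring`).

This uses at most `χ + 2|S|` colors, which suffices if `|S| < ⌈n/r⌉`. Otherwise `|S| * r = n`, the
sets `N(s)` cover `V`, no old color survives, and `2|S| ≤ χ + 2|S| - 2` because `χ ≥ 2`.
-/

open SimpleGraph

variable {V : Type*}

/-- The degree of a vertex `v`: the number of neighbors of `v` in `G`. -/
noncomputable def deg (G : SimpleGraph V) (v : V) : ℕ := (G.neighborSet v).ncard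

/-- `c` is a dynamic coloring of `G` with `k` colors: it is a proper coloring, and every
vertex of degree at least 2 has at least two differently colored neighbors. -/
def IsDynamicColoring (G : SimpleGraph V) {k : ℕ} (c : V → Fin k) : Prop :=
  (∀ ⦃u v⦄, G.Adj u v → c u ≠ c v) ∧
  ∀ v : V, 2 ≤ deg G v → ∃ u w : V, G.Adj v u ∧ G.Adj v w ∧ c u ≠ c w

/-- The dynamic chromatic number `χ₂(G)`. -/
noncomputable def dynChromNum (G : SimpleGraph V) : ℕ :=
  sInf {k | ∃ c : V → Fin k, IsDynamicColoring G c}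

/-- The chromatic number `χ(G)`. -/
noncomputable def chromNum (G : SimpleGraph V) : ℕ := sInf {n | G.Colorable n}

/-- The independence number `α(G)`. -/
noncomputable def indepNum (G : SimpleGraph V) : ℕ :=
  sSup {n | ∃ s : Finset V, ((s : Set V)).Pairwise (fun u v => ¬ G.Adj u v) ∧ s.card = n}

/-- The clique number `ω(G)`. -/
noncomputable def cliqueNum (G : SimpleGraph V) : ℕ :=
  sSup {n | ∃ s : Finset V, G.IsNClique n s}

/-- The matching number `α'(G)`. -/
noncomputable def matchNum (G : SimpleGraph V) : ℕ :=
  sSup {n | ∃ M : G.Subgraph, M.IsMatching ∧ M.verts.ncard = 2 * n}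

/-- The minimum degree `δ(G)`. -/
noncomputable def minDeg (G : SimpleGraph V) : ℕ := sInf {d | ∃ v, deg G v = d}

/-- The maximum degree `Δ(G)`. -/
noncomputable def maxDeg (G : SimpleGraph V) : ℕ := sSup {d | ∃ v, deg G v = d}

/-- A dynamic coloring by an arbitrary type, whose values lie in a finite set `T`, bounds `χ₂`. -/
lemma dynChromNum_le_card {α : Type*} (G : SimpleGraph V) (d : V → α) (T : Finset α)
    (hT : ∀ v, d v ∈ T) (hproper : ∀ ⦃u v⦄, G.Adj u v → d u ≠ d v)
    (hdyn : ∀ v : V, 2 ≤ deg G v → ∃ u w : V, G.Adj v u ∧ G.Adj v w ∧ d u ≠ d w) :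
    dynChromNum G ≤ T.card := by
  apply Nat.sInf_le
  have key : ∀ u v, d u ≠ d v → T.equivFin ⟨d u, hT u⟩ ≠ T.equivFin ⟨d v, hT v⟩ := by
    intro u v h h'
    exact h (congrArg Subtype.val (T.equivFin.injective h'))
  refine ⟨fun v => T.equivFin ⟨d v, hT v⟩, fun u v h => key u v (hproper h), fun v hv => ?_⟩
  obtain ⟨u, w, hu, hw, h⟩ := hdyn v hv
  exact ⟨u, w, hu, hw, key u w h⟩

/-- `S` is a set of vertices with pairwise disjoint neighborhoods, each monochromatic under `c`. -/
def IsMonoPacking {α : Type*} (G : SimpleGraph V) (c : V → α) (S : Finset V) : Prop :=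
  (∀ s ∈ S, ∀ t ∈ S, ∀ x, G.Adj s x → G.Adj t x → s = t) ∧
  ∀ s ∈ S, ∀ x y, G.Adj s x → G.Adj s y → c x = c y

/-- A maximal packing of monochromatic neighborhoods yields a dynamic coloring in which the
neighbors of each `s` in the packing receive colors `(s, true)` and `(s, false)`, while all other
vertices keep their color. -/
lemma exists_dynamic_recoloring [Fintype V] {α : Type*} (G : SimpleGraph V) (r : ℕ) (hr : 2 ≤ r)
    (hreg : ∀ v, deg G v = r) (c : V → α) (hc : ∀ ⦃u v⦄, G.Adj u v → c u ≠ c v) :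
    ∃ (S : Finset V) (d : V → α ⊕ (V × Bool)), IsMonoPacking G c S ∧
      (∀ v, (∃ s ∈ S, G.Adj s v ∧ ∃ b, d v = Sum.inr (s, b)) ∨
        ((∀ s ∈ S, ¬ G.Adj s v) ∧ d v = Sum.inl (c v))) ∧
      (∀ ⦃u v⦄, G.Adj u v → d u ≠ d v) ∧
      ∀ v : V, ∃ u w : V, G.Adj v u ∧ G.Adj v w ∧ d u ≠ d w := by
  classical
  obtain ⟨S, hS, hmax⟩ := Finset.exists_max_image
    ((Finset.univ : Finset (Finset V)).filter (IsMonoPacking G c)) Finset.card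
    ⟨∅, by simp [IsMonoPacking]⟩
  have hS : IsMonoPacking G c S := by simpa using hS
  have hdeg : ∀ v, ∃ x y, G.Adj v x ∧ G.Adj v y ∧ x ≠ y := by
    intro v
    have h : 1 < (G.neighborSet v).ncard := by
      have := hreg v
      unfold deg at this
      omega
    obtain ⟨x, hx, y, hy, hxy⟩ := (Set.one_lt_ncard (Set.toFinite _)).1 h
    exact ⟨x, y, hx, hy, hxy⟩
  choose p q hp hq hpq using hdeg
  let d : V → α ⊕ (V × Bool) := fun v =>
    if h : ∃ s ∈ S, G.Adj s v then Sum.inr (h.choose, decide (v = p h.choose)) else Sum.inl (c v)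
  have hd1 : ∀ s ∈ S, ∀ v, G.Adj s v → d v = Sum.inr (s, decide (v = p s)) := by
    intro s hs v hv
    have h : ∃ s ∈ S, G.Adj s v := ⟨s, hs, hv⟩
    have he : h.choose = s := hS.1 _ h.choose_spec.1 _ hs v h.choose_spec.2 hv
    simp only [d, dif_pos h, he]
  have hd2 : ∀ v, (∀ s ∈ S, ¬ G.Adj s v) → d v = Sum.inl (c v) := by
    intro v hv
    have h : ¬ ∃ s ∈ S, G.Adj s v := by
      rintro ⟨s, hs, h⟩
      exact hv s hs h
    simp only [d, dif_neg h]
  have hd : ∀ v, (∃ s ∈ S, G.Adj s v ∧ ∃ b, d v = Sum.inr (s, b)) ∨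
      ((∀ s ∈ S, ¬ G.Adj s v) ∧ d v = Sum.inl (c v)) := by
    intro v
    by_cases h : ∃ s ∈ S, G.Adj s v
    · obtain ⟨s, hs, h⟩ := h
      exact Or.inl ⟨s, hs, h, _, hd1 s hs v h⟩
    · push Not at h
      exact Or.inr ⟨h, hd2 v h⟩
  refine ⟨S, d, hS, hd, ?_, ?_⟩
  · intro u v huv he
    rcases hd u with ⟨s, hs, hsu, b, hu⟩ | ⟨-, hu⟩ <;>
      rcases hd v with ⟨t, ht, htv, b', hv⟩ | ⟨-, hv⟩ <;> rw [hu, hv] at he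
    · simp only [Sum.inr.injEq, Prod.mk.injEq] at he
      obtain ⟨rfl, -⟩ := he
      exact hc huv (hS.2 s hs u v hsu htv)
    · simp at he
    · simp at he
    · exact hc huv (Sum.inl.inj he)
  · intro v
    by_cases hmeet : ∃ s ∈ S, ∃ x, G.Adj s x ∧ G.Adj v x
    · obtain ⟨s, hs, x, hsx, hvx⟩ := hmeet
      by_cases hsub : G.neighborSet v ⊆ G.neighborSet s
      · -- Both neighborhoods have `r` elements, so the inclusion is an equality.
        have heq : G.neighborSet v = G.neighborSet s :=
          Set.eq_of_subset_of_ncard_le hsub (le_of_eq ((hreg s).trans (hreg v).symm))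
            (Set.toFinite _)
        have hv : ∀ y, G.Adj s y → G.Adj v y := fun y hy => heq.symm.subset hy
        refine ⟨p s, q s, hv _ (hp s), hv _ (hq s), ?_⟩
        rw [hd1 s hs _ (hp s), hd1 s hs _ (hq s)]
        simpa using (hpq s).symm
      · obtain ⟨y, hvy, hsy⟩ := Set.not_subset.1 hsub
        refine ⟨x, y, hvx, hvy, fun he => hsy ?_⟩
        rw [hd1 s hs x hsx] at he
        rcases hd y with ⟨t, ht, hty, b, hy⟩ | ⟨-, hy⟩
        · rw [hy] at he
          simp only [Sum.inr.injEq, Prod.mk.injEq] at he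
          exact he.1 ▸ hty
        · rw [hy] at he
          simp at he
    · push Not at hmeet
      by_contra! hcon
      have hold : ∀ x, G.Adj v x → d x = Sum.inl (c x) := fun x hx =>
        hd2 x fun s hs hsx => hmeet s hs x hsx hx
      have hvS : v ∉ S := fun hv => hmeet v hv _ (hp v) (hp v)
      have hnew : IsMonoPacking G c (insert v S) := by
        refine ⟨fun s hs t ht x hsx htx => ?_, fun s hs x y hx hy => ?_⟩
        · rcases Finset.mem_insert.1 hs with rfl | hs' <;>
            rcases Finset.mem_insert.1 ht with rfl | ht'
          · rfl
          · exact absurd hsx (hmeet t ht' x htx)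
          · exact absurd htx (hmeet s hs' x hsx)
          · exact hS.1 s hs' t ht' x hsx htx
        · rcases Finset.mem_insert.1 hs with rfl | hs
          · have := hcon x y hx hy
            rw [hold x hx, hold y hy] at this
            exact Sum.inl.inj this
          · exact hS.2 s hs x y hx hy
      have := hmax (insert v S) (by simpa using hnew)
      rw [Finset.card_insert_of_notMem hvS] at this
      omega

/-- If `G` is an `r`-regular graph on `n` vertices with `r ≥ 1`, then
`χ₂(G) − χ(G) ≤ 2⌈n/r⌉ − 2`. -/
theorem stmt6 [Fintype V] (G : SimpleGraph V) (r : ℕ) (hr : 1 ≤ r)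
    (hreg : ∀ v, deg G v = r) :
    dynChromNum G - chromNum G ≤ 2 * ⌈(Fintype.card V : ℝ) / (r : ℝ)⌉₊ - 2 := by
  classical
  rcases isEmpty_or_nonempty V with hV | ⟨⟨v₀⟩⟩
  · have := dynChromNum_le_card G (fun v => v) ∅ (fun v => hV.elim v) (fun u => hV.elim u)
      (fun v => hV.elim v)
    simp at this
    omega
  have hcol : G.Colorable (chromNum G) :=
    Nat.sInf_mem (s := {n | G.Colorable n}) ⟨_, G.colorable_of_fintype⟩
  obtain ⟨C⟩ := hcol
  have hC : ∀ ⦃u v⦄, G.Adj u v → C u ≠ C v := fun u v h => C.valid h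
  rcases Nat.lt_or_ge r 2 with h2 | h2
  · -- If `r = 1`, the second condition on dynamic colorings is vacuous.
    have := dynChromNum_le_card G C Finset.univ (fun v => Finset.mem_univ _) hC
      (fun v hv => by rw [hreg v] at hv; omega)
    rw [Finset.card_univ, Fintype.card_fin] at this
    omega
  have hχ : 2 ≤ chromNum G := by
    have h0 : (G.neighborSet v₀).ncard ≠ 0 := by
      have := hreg v₀
      unfold deg at this
      omega
    obtain ⟨x, hx⟩ := Set.nonempty_of_ncard_ne_zero h0
    have h1 := hC hx
    have h3 := (C v₀).isLt
    have h4 := (C x).isLt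
    have h5 := fun h => h1 (Fin.ext h)
    omega
  obtain ⟨S, d, hS, hd, hproper, hdyn⟩ := exists_dynamic_recoloring G r h2 hreg C hC
  have hcardU : (S.biUnion fun s => G.neighborFinset s).card = S.card * r := by
    rw [Finset.card_biUnion, Finset.sum_const_nat]
    · intro s _
      rw [← hreg s, deg, Set.ncard_eq_toFinset_card']
      rfl
    · intro s hs t ht hst
      refine Finset.disjoint_left.2 ?_
      intro x hsx htx
      exact hst (hS.1 s hs t ht x (by simpa using hsx) (by simpa using htx))
  have hle : S.card * r ≤ Fintype.card V := hcardU ▸ Finset.card_le_univ _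
  set m := ⌈(Fintype.card V : ℝ) / (r : ℝ)⌉₊ with hm
  have hceil : Fintype.card V ≤ m * r := by
    have h := Nat.le_ceil ((Fintype.card V : ℝ) / (r : ℝ))
    rw [div_le_iff₀ (by positivity)] at h
    exact_mod_cast h
  have hSm : S.card ≤ m := Nat.le_of_mul_le_mul_right (hle.trans hceil) (by omega)
  rcases hSm.lt_or_eq with hlt | heq
  · have := dynChromNum_le_card G d (Finset.univ.disjSum (S ×ˢ Finset.univ)) (fun v => by
      rcases hd v with ⟨s, hs, -, b, h⟩ | ⟨-, h⟩ <;> rw [h] <;> simp [*]) hproper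
      (fun v _ => hdyn v)
    rw [Finset.card_disjSum, Finset.card_product, Finset.card_univ, Finset.card_univ,
      Fintype.card_fin, Fintype.card_bool] at this
    omega
  · -- Equality forces the neighborhoods of `S` to cover `V`.
    have huniv : (S.biUnion fun s => G.neighborFinset s) = Finset.univ := by
      apply Finset.eq_univ_of_card
      rw [hcardU]
      exact le_antisymm hle (heq ▸ hceil)
    have := dynChromNum_le_card G d ((S ×ˢ Finset.univ).map Function.Embedding.inr) (fun v => by
      rcases hd v with ⟨s, hs, -, b, h⟩ | ⟨h, -⟩
      · rw [h]
        simp [hs]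
      · have hv : v ∈ S.biUnion fun s => G.neighborFinset s := huniv ▸ Finset.mem_univ v
        obtain ⟨s, hs, hsv⟩ := Finset.mem_biUnion.1 hv
        exact absurd (by simpa using hsv) (h s hs)) hproper (fun v _ => hdyn v)
    rw [Finset.card_map, Finset.card_product, Finset.card_univ, Fintype.card_bool] at this
    omega
end

section
/- If G is a finite simple graph, then χ₂(G) − χ(G) ≤ α′(G) + 3, where α′(G) is the matching number of G. -/
/-!
Take a maximum matching with edges `x i — y i`, `i < m`, and let `U` be the independent set of
unsaturated vertices. Starting from an optimal proper coloring, `m + 2` new colors suffice: each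
`x i` receives a private color, all of `U` receives one color, and a last color goes to certain of
the `y i`. Any vertex of degree at least 2 adjacent to some `x i` then sees two colors, which
settles every `y i`. If the endpoints are ordered so that `x i` has a neighbor in `U` whenever
`y i` does, the absence of augmenting paths shows that each non-isolated vertex of `U` is adjacent
to some `x i`.

There remain the indices `i` for which `x i` has no neighbor among the `x j`. If `x i` has a
neighbor in `U`, that neighbor and `y i` have different colors. Otherwise call `i` bad, and choose
the ordering of the endpoints with as few bad indices as possible (`exists_good_matching`).
Exchanging the endpoints of bad edges never creates bad indices, so by minimality `y i` for bad `i`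
is adjacent to no `x k` with `k ≠ i` and to no `y j` with `j` bad. Hence the `y i` with `i` bad form
an independent set and can share the last color, and the second neighbor of a bad `x i` is some
`y j` with `j` not bad, which keeps its old color (`exists_dynamic`).
-/

open SimpleGraph

variable {V : Type*}

/-- The edges `x i — y i` (`i : Fin m`) form a matching of `G`: they are edges of `G` and their
`2 * m` endpoints are pairwise distinct. The order of the endpoints of each edge is recorded. -/
def IsOrdMatching (G : SimpleGraph V) {m : ℕ} (x y : Fin m → V) : Prop :=
  (∀ i, G.Adj (x i) (y i)) ∧ (∀ i j, x i = x j → i = j) ∧ (∀ i j, y i = y j → i = j) ∧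
    ∀ i j, x i ≠ y j

/-- `v` is not an endpoint of any of the edges `x i — y i`. -/
def Unsat {m : ℕ} (x y : Fin m → V) (v : V) : Prop := ∀ i, v ≠ x i ∧ v ≠ y i

/-- `v` has an unsaturated neighbor. -/
def HasUnsatNbr (G : SimpleGraph V) {m : ℕ} (x y : Fin m → V) (v : V) : Prop :=
  ∃ u, Unsat x y u ∧ G.Adj v u

/-- The index `i` is bad if `x i` has no neighbor among the `x j` and none among the unsaturated
vertices. -/
def BadIdx (G : SimpleGraph V) {m : ℕ} (x y : Fin m → V) (i : Fin m) : Prop :=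
  (∀ j, ¬ G.Adj (x i) (x j)) ∧ ¬ HasUnsatNbr G x y (x i)

open Classical in
/-- Exchanging the endpoints of the edges with index in `S`, this being the new first endpoints
(and `swapOn S y x` the new second ones). -/
noncomputable def swapOn {m : ℕ} (S : Set (Fin m)) (x y : Fin m → V) : Fin m → V :=
  fun i => if i ∈ S then y i else x i

lemma IsOrdMatching.le_matchNum [Fintype V] {G : SimpleGraph V} {m : ℕ} {x y : Fin m → V}
    (h : IsOrdMatching G x y) : m ≤ matchNum G := by
  classical
  obtain ⟨hadj, hx, hy, hxy⟩ := h
  apply le_csSup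
  · refine ⟨Nat.card V, ?_⟩
    rintro n ⟨M, -, hM⟩
    have := Set.ncard_le_card M.verts
    omega
  · let M : G.Subgraph :=
      { verts := Set.range (Sum.elim x y)
        Adj := fun a b => ∃ i, (a = x i ∧ b = y i) ∨ (a = y i ∧ b = x i)
        adj_sub := by
          rintro a b ⟨i, ⟨rfl, rfl⟩ | ⟨rfl, rfl⟩⟩
          · exact hadj i
          · exact (hadj i).symm
        edge_vert := by
          rintro a b ⟨i, ⟨rfl, rfl⟩ | ⟨rfl, rfl⟩⟩
          · exact ⟨Sum.inl i, rfl⟩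
          · exact ⟨Sum.inr i, rfl⟩
        symm := ⟨by
          rintro a b ⟨i, h | h⟩
          · exact ⟨i, Or.inr ⟨h.2, h.1⟩⟩
          · exact ⟨i, Or.inl ⟨h.2, h.1⟩⟩⟩ }
    refine ⟨M, ?_, ?_⟩
    · rintro v ⟨i | i, rfl⟩
      · refine ⟨y i, ⟨i, Or.inl ⟨rfl, rfl⟩⟩, ?_⟩
        rintro b ⟨j, ⟨h1, rfl⟩ | ⟨h1, rfl⟩⟩
        · rw [hx i j h1]
        · exact absurd h1 (hxy i j)
      · refine ⟨x i, ⟨i, Or.inr ⟨rfl, rfl⟩⟩, ?_⟩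
        rintro b ⟨j, ⟨h1, rfl⟩ | ⟨h1, rfl⟩⟩
        · exact absurd h1.symm (hxy j i)
        · rw [hy i j h1]
    · have hinj : Function.Injective (Sum.elim x y) :=
        Function.Injective.sumElim (fun i j => hx i j) (fun i j => hy i j) hxy
      change (Set.range (Sum.elim x y)).ncard = 2 * m
      rw [← Set.image_univ, Set.ncard_image_of_injective _ hinj, Set.ncard_univ,
        Nat.card_eq_fintype_card]
      simp
      omega

lemma IsOrdMatching.swapOn {G : SimpleGraph V} {m : ℕ} {x y : Fin m → V}
    (h : IsOrdMatching G x y) (S : Set (Fin m)) :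
    IsOrdMatching G (swapOn S x y) (swapOn S y x) := by
  obtain ⟨hadj, hx, hy, hxy⟩ := h
  refine ⟨fun i => ?_, fun i j => ?_, fun i j => ?_, fun i j => ?_⟩
  · have := hadj i
    have := this.symm
    unfold _root_.swapOn
    split_ifs <;> assumption
  all_goals
    have := hx i j
    have := hy i j
    have := hxy i j
    have := hxy j i
    unfold _root_.swapOn
    grind

lemma unsat_swapOn {m : ℕ} (x y : Fin m → V) (S : Set (Fin m)) (v : V) :
    Unsat (swapOn S x y) (swapOn S y x) v ↔ Unsat x y v := by
  unfold Unsat swapOn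
  constructor <;> intro h i <;> have := h i <;> grind

lemma hasUnsatNbr_swapOn (G : SimpleGraph V) {m : ℕ} (x y : Fin m → V) (S : Set (Fin m)) (v : V) :
    HasUnsatNbr G (swapOn S x y) (swapOn S y x) v ↔ HasUnsatNbr G x y v := by
  simp only [HasUnsatNbr, unsat_swapOn]

/-- Two adjacent unsaturated vertices would enlarge the matching. -/
lemma IsOrdMatching.extend {G : SimpleGraph V} {m : ℕ} {x y : Fin m → V}
    (h : IsOrdMatching G x y) {u v : V} (hu : Unsat x y u) (hv : Unsat x y v) (huv : G.Adj u v) :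
    ∃ x' y' : Fin (m + 1) → V, IsOrdMatching G x' y' := by
  obtain ⟨hadj, hx, hy, hxy⟩ := h
  have hne := huv.ne
  refine ⟨Fin.cons u x, Fin.cons v y, fun i => ?_, fun i j => ?_, fun i j => ?_, fun i j => ?_⟩
  · refine Fin.cases ?_ (fun i => ?_) i
    · simpa using huv
    · simpa using hadj i
  all_goals
    refine Fin.cases ?_ (fun i => ?_) i <;> refine Fin.cases ?_ (fun j => ?_) j <;>
      simp only [Fin.cons_zero, Fin.cons_succ] <;> unfold Unsat at hu hv <;> grind

/-- A path `u, x i, y i, v` with distinct unsaturated ends is augmenting. -/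
lemma IsOrdMatching.augment {G : SimpleGraph V} {m : ℕ} {x y : Fin m → V}
    (h : IsOrdMatching G x y) {u v : V} (hu : Unsat x y u) (hv : Unsat x y v) (huv : u ≠ v)
    (i : Fin m) (hxu : G.Adj (x i) u) (hyv : G.Adj (y i) v) :
    ∃ x' y' : Fin (m + 1) → V, IsOrdMatching G x' y' := by
  classical
  have h' : IsOrdMatching G x (Function.update y i u) := by
    obtain ⟨hadj, hx, hy, hxy⟩ := h
    unfold Unsat at hu
    refine ⟨fun j => ?_, hx, fun j k => ?_, fun j k => ?_⟩
    · by_cases hj : j = i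
      · subst hj; simpa using hxu
      · simpa [hj] using hadj j
    all_goals
      simp only [Function.update_apply]
      grind
  obtain ⟨hadj, hx, hy, hxy⟩ := h
  refine h'.extend (u := y i) (v := v) ?_ ?_ hyv
  all_goals
    intro j
    unfold Unsat at hu hv
    simp only [Function.update_apply]
    grind

/-- There is a maximum matching whose edges are ordered so that the first endpoint has an
unsaturated neighbor as soon as the second one does, and so that the bad indices are pairwise
unrelated: otherwise exchanging the endpoints of one or two bad edges lowers the number of bad
indices. -/
lemma exists_good_matching [Fintype V] (G : SimpleGraph V) :
    ∃ (m : ℕ) (x y : Fin m → V), IsOrdMatching G x y ∧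
      (¬ ∃ x' y' : Fin (m + 1) → V, IsOrdMatching G x' y') ∧
      (∀ i, HasUnsatNbr G x y (y i) → HasUnsatNbr G x y (x i)) ∧
      (∀ i k, BadIdx G x y i → k ≠ i → ¬ G.Adj (y i) (x k)) ∧
      (∀ i j, BadIdx G x y i → BadIdx G x y j → ¬ G.Adj (y i) (y j)) := by
  classical
  obtain ⟨m, ⟨x₀, y₀, h₀⟩, hmax⟩ : ∃ m, (∃ x y : Fin m → V, IsOrdMatching G x y) ∧
      ¬ ∃ x y : Fin (m + 1) → V, IsOrdMatching G x y := by
    by_contra! hcon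
    have hall : ∀ m, ∃ x y : Fin m → V, IsOrdMatching G x y := by
      intro m
      induction m with
      | zero =>
        exact ⟨Fin.elim0, Fin.elim0, fun i => i.elim0, fun i => i.elim0, fun i => i.elim0,
          fun i => i.elim0⟩
      | succ m ih =>
        obtain ⟨x, y, h⟩ := ih
        exact hcon m ⟨x, y, h⟩
    obtain ⟨x, y, h⟩ := hall (matchNum G + 1)
    have := h.le_matchNum
    omega
  let P : (Fin m → V) × (Fin m → V) → Prop := fun p => IsOrdMatching G p.1 p.2 ∧
    ∀ i, HasUnsatNbr G p.1 p.2 (p.2 i) → HasUnsatNbr G p.1 p.2 (p.1 i)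
  have hP : ∃ p, P p := by
    let S : Set (Fin m) := {i | HasUnsatNbr G x₀ y₀ (y₀ i)}
    refine ⟨(swapOn S x₀ y₀, swapOn S y₀ x₀), h₀.swapOn S, fun i => ?_⟩
    simp only [hasUnsatNbr_swapOn]
    by_cases hi : i ∈ S
    · intro _
      rw [swapOn, if_pos hi]
      exact hi
    · intro hh
      rw [swapOn, if_neg hi] at hh
      exact absurd hh hi
  let N : (Fin m → V) × (Fin m → V) → ℕ := fun p =>
    (Finset.univ.filter fun i => BadIdx G p.1 p.2 i).card
  obtain ⟨⟨x, y⟩, ⟨hM, hpref⟩, hmin⟩ : ∃ p, P p ∧ ∀ q, P q → N p ≤ N q := by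
    obtain ⟨p, hp, hpe⟩ := Nat.find_spec (p := fun n => ∃ p, P p ∧ N p = n)
      (let ⟨p, hp⟩ := hP; ⟨N p, p, hp, rfl⟩)
    exact ⟨p, hp, fun q hq => hpe ▸ Nat.find_min' _ ⟨q, hq, rfl⟩⟩
  dsimp only at hM hpref
  -- Exchanging endpoints of bad edges only creates no new bad index, hence by minimality removes
  -- none.
  have key : ∀ S : Set (Fin m), (∀ i ∈ S, BadIdx G x y i) → ∀ i ∈ S,
      BadIdx G (swapOn S x y) (swapOn S y x) i := by
    intro S hS i hi
    by_contra hnb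
    have hq : P (swapOn S x y, swapOn S y x) := by
      refine ⟨hM.swapOn S, fun k => ?_⟩
      simp only [hasUnsatNbr_swapOn]
      by_cases hk : k ∈ S
      · intro hh
        exact absurd (by simpa [swapOn, hk] using hh) (hS k hk).2
      · simpa [swapOn, hk] using hpref k
    refine absurd (hmin _ hq) (not_le.mpr ?_)
    apply Finset.card_lt_card
    rw [Finset.ssubset_iff_of_subset]
    · exact ⟨i, by simpa using hS i hi, by simpa using hnb⟩
    · intro k hk
      simp only [Finset.mem_filter, Finset.mem_univ, true_and] at hk ⊢
      by_cases hkS : k ∈ S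
      · exact hS k hkS
      · obtain ⟨h1, h2⟩ := hk
        rw [hasUnsatNbr_swapOn] at h2
        have hxk : swapOn S x y k = x k := by simp [swapOn, hkS]
        rw [hxk] at h1 h2
        refine ⟨fun l hl => ?_, h2⟩
        by_cases hlS : l ∈ S
        · exact (hS l hlS).1 k hl.symm
        · exact h1 l (by simpa [swapOn, hlS] using hl)
  refine ⟨m, x, y, hM, hmax, hpref, fun i k hi hk hadj => ?_, fun i j hi hj hadj => ?_⟩
  · have := (key {i} (by simpa using hi) i rfl).1 k
    simp [swapOn, hk] at this
    exact this hadj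
  · have := (key {i, j} (by simp [hi, hj]) i (by simp)).1 j
    simp [swapOn] at this
    exact this hadj

lemma exists_nbr_ne [Fintype V] {G : SimpleGraph V} {v : V} (h : 2 ≤ deg G v) (u : V) :
    ∃ w, G.Adj v w ∧ w ≠ u := by
  obtain ⟨w, hw, hne⟩ := Set.exists_ne_of_one_lt_ncard (s := G.neighborSet v) h u
  exact ⟨w, hw, hne⟩

/-- The recoloring with `m + 2` new colors, `m` of them used once each on the `x i`. -/
lemma exists_dynamic [Fintype V] (G : SimpleGraph V) {n : ℕ} (c : G.Coloring (Fin n)) :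
    ∃ (m : ℕ), m ≤ matchNum G ∧ ∃ f : V → Fin n ⊕ (Fin m ⊕ Bool),
      (∀ ⦃u v⦄, G.Adj u v → f u ≠ f v) ∧
      ∀ v : V, 2 ≤ deg G v → ∃ u w : V, G.Adj v u ∧ G.Adj v w ∧ f u ≠ f w := by
  classical
  obtain ⟨m, x, y, hM, hmax, hpref, hyx, hyy⟩ := exists_good_matching G
  refine ⟨m, hM.le_matchNum, ?_⟩
  have hM' := hM
  obtain ⟨hadj, hx, hy, hxy⟩ := hM'
  let f : V → Fin n ⊕ (Fin m ⊕ Bool) := fun v =>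
    if h : ∃ i, v = x i then Sum.inr (Sum.inl h.choose)
    else if Unsat x y v then Sum.inr (Sum.inr true)
    else if ∃ i, v = y i ∧ BadIdx G x y i then Sum.inr (Sum.inr false)
    else Sum.inl (c v)
  have fx : ∀ i, f (x i) = Sum.inr (Sum.inl i) := by
    intro i
    have h : ∃ j, x i = x j := ⟨i, rfl⟩
    simp only [f, dif_pos h]
    rw [hx _ _ h.choose_spec.symm]
  have fU : ∀ v, Unsat x y v → f v = Sum.inr (Sum.inr true) := by
    intro v hv
    have h : ¬ ∃ j, v = x j := fun ⟨j, hj⟩ => (hv j).1 hj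
    simp only [f, dif_neg h, if_pos hv]
  have nU : ∀ i, ¬ Unsat x y (y i) := fun i h => (h i).2 rfl
  have nX : ∀ i, ¬ ∃ j, y i = x j := fun i ⟨j, hj⟩ => hxy j i hj.symm
  have fB : ∀ i, BadIdx G x y i → f (y i) = Sum.inr (Sum.inr false) := by
    intro i hi
    have h : ∃ j, y i = y j ∧ BadIdx G x y j := ⟨i, rfl, hi⟩
    simp only [f, dif_neg (nX i), if_neg (nU i), if_pos h]
  have fG : ∀ i, ¬ BadIdx G x y i → f (y i) = Sum.inl (c (y i)) := by
    intro i hi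
    have h : ¬ ∃ j, y i = y j ∧ BadIdx G x y j := by
      rintro ⟨j, hj, hb⟩
      rw [← hy _ _ hj] at hb
      exact hi hb
    simp only [f, dif_neg (nX i), if_neg (nU i), if_neg h]
  have cases : ∀ v, (∃ i, v = x i) ∨ (∃ i, v = y i ∧ BadIdx G x y i) ∨
      (∃ i, v = y i ∧ ¬ BadIdx G x y i) ∨ Unsat x y v := by
    intro v
    by_cases hv : Unsat x y v
    · tauto
    · unfold Unsat at hv
      push Not at hv
      obtain ⟨i, hi⟩ := hv
      grind
  refine ⟨f, fun u v huv => ?_, fun v hv => ?_⟩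
  · rcases cases u with ⟨i, rfl⟩ | ⟨i, rfl, hi⟩ | ⟨i, rfl, hi⟩ | hu <;>
    rcases cases v with ⟨j, rfl⟩ | ⟨j, rfl, hj⟩ | ⟨j, rfl, hj⟩ | hv
    all_goals first | rw [fB _ hi] | rw [fG _ hi] | rw [fU _ hu] | rw [fx i]
    all_goals first | rw [fB _ hj] | rw [fG _ hj] | rw [fU _ hv] | rw [fx j]
    all_goals try simp only [ne_eq, reduceCtorEq, not_false_eq_true, Sum.inr.injEq, Sum.inl.injEq]
    · rintro rfl
      exact huv.ne rfl
    · exact (hyy i j hi hj huv).elim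
    · exact c.valid huv
    · exact (hmax (hM.extend hu hv huv)).elim
  · have hX : ∀ i, G.Adj v (x i) → ∃ u w : V, G.Adj v u ∧ G.Adj v w ∧ f u ≠ f w := by
      intro i hi
      -- The color of `x i` is used nowhere else, so any second neighbor will do.
      obtain ⟨w, hw, hne⟩ := exists_nbr_ne hv (x i)
      refine ⟨w, x i, hw, hi, ?_⟩
      rw [fx]
      rcases cases w with ⟨j, rfl⟩ | ⟨j, rfl, hj⟩ | ⟨j, rfl, hj⟩ | hu
      · rw [fx]
        rintro h
        simp only [Sum.inr.injEq, Sum.inl.injEq] at h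
        exact hne (h ▸ rfl)
      · simp [fB _ hj]
      · simp [fG _ hj]
      · simp [fU _ hu]
    have hY : ∀ i, v = y i → ∃ u w : V, G.Adj v u ∧ G.Adj v w ∧ f u ≠ f w := by
      rintro i rfl
      exact hX i (hadj i).symm
    rcases cases v with ⟨i, rfl⟩ | ⟨i, hi, -⟩ | ⟨i, hi, -⟩ | hu
    · by_cases hxx : ∃ j, G.Adj (x i) (x j)
      · exact hX _ hxx.choose_spec
      by_cases hxu : HasUnsatNbr G x y (x i)
      · obtain ⟨u, hu, hau⟩ := hxu
        refine ⟨y i, u, hadj i, hau, ?_⟩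
        by_cases hb : BadIdx G x y i
        · simp [fB _ hb, fU _ hu]
        · simp [fG _ hb, fU _ hu]
      -- Here `i` is bad, and the second neighbor of `x i` is `y j` with `j` not bad.
      push Not at hxx
      have hb : BadIdx G x y i := ⟨hxx, hxu⟩
      obtain ⟨w, hw, hne⟩ := exists_nbr_ne hv (y i)
      rcases cases w with ⟨j, rfl⟩ | ⟨j, rfl, hj⟩ | ⟨j, rfl, hj⟩ | hu
      · exact (hxx j hw).elim
      · refine (hyx j i hj ?_ hw.symm).elim
        rintro rfl
        exact hne rfl
      · exact ⟨y i, y j, hadj i, hw, by simp [fB _ hb, fG _ hj]⟩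
      · exact (hxu ⟨w, hu, hw⟩).elim
    · exact hY i hi
    · exact hY i hi
    · obtain ⟨w, hw, -⟩ := exists_nbr_ne hv v
      have hyv : ∀ i, w = y i → ∃ u w : V, G.Adj v u ∧ G.Adj v w ∧ f u ≠ f w := by
        rintro i rfl
        obtain ⟨u, hu', hau⟩ := hpref i ⟨v, hu, hw.symm⟩
        by_cases huv : u = v
        · subst huv
          exact hX i hau.symm
        · exact (hmax (hM.augment hu' hu huv i hau hw.symm)).elim
      rcases cases w with ⟨j, rfl⟩ | ⟨j, h, -⟩ | ⟨j, h, -⟩ | hw'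
      · exact hX j hw
      · exact hyv j h
      · exact hyv j h
      · exact (hmax (hM.extend hu hw' hw)).elim

/-- For every finite simple graph `G`, `χ₂(G) − χ(G) ≤ α'(G) + 3`. -/
theorem stmt7 [Fintype V] (G : SimpleGraph V) :
    dynChromNum G - chromNum G ≤ matchNum G + 3 := by
  have hcol : G.Colorable (chromNum G) :=
    Nat.sInf_mem (s := {n | G.Colorable n}) ⟨_, G.colorable_of_fintype⟩
  obtain ⟨c⟩ := hcol
  obtain ⟨m, hm, f, hf1, hf2⟩ := exists_dynamic G c
  have e : Fin (chromNum G) ⊕ (Fin m ⊕ Bool) ≃ Fin (chromNum G + (m + 2)) :=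
    Fintype.equivFinOfCardEq (by simp)
  have hle : dynChromNum G ≤ chromNum G + (m + 2) := by
    refine Nat.sInf_le ⟨fun v => e (f v), fun u v huv h => hf1 huv (e.injective h), fun v hv => ?_⟩
    obtain ⟨u, w, hu, hw, hne⟩ := hf2 v hv
    exact ⟨u, w, hu, hw, fun h => hne (e.injective h)⟩
  omega
end

section
/- For every pair of natural numbers a, b with a ≥ b ≥ 2, there exists a finite simple graph G such that δ(G) = b, Δ(G) = a + 1, and χ₂(G) − χ(G) = ⌈Δ(G)/δ(G)⌉. -/
/-!
Write `k = a / b + 1` and `t = a % b + 1`, so that `k ≥ 2` and `k = ⌈(a + 1) / b⌉`. Take the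
complete `k`-partite graph with parts `P i` of size `b`, and for each `i` add an independent set
`Q i` of `t` new vertices, each joined to exactly the vertices of `P i` (`blowup` below).

A vertex of `P i` has degree `(k - 1) b + t = a + 1`, a vertex of `Q i` has degree `b`. The
chromatic number is `k`. In a dynamic coloring, the vertices of `Q i` force at least two colors on
`P i`, and distinct parts share no color, so at least `2k` colors are needed; `2k` colors suffice.
Hence `χ₂ - χ = k`. The graph lives on a product type; `exists_fin_copy` moves it to `Fin n`.
-/

open SimpleGraph

variable {V : Type*}

/-! ### Transport along a bijection of the vertex sets -/

lemma deg_comap {V W : Type*} (e : V ≃ W) (H : SimpleGraph W) (v : V) :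
    deg (H.comap e) v = deg H (e v) := by
  unfold deg
  rw [← Set.ncard_image_of_injective _ e.injective]
  congr 1
  ext w
  constructor
  · rintro ⟨x, hx, rfl⟩
    exact hx
  · intro hw
    exact ⟨e.symm w, by simpa using hw, by simp⟩

lemma exists_dynamic_comap_iff {V W : Type*} (e : V ≃ W) (H : SimpleGraph W) (k : ℕ) :
    (∃ c : V → Fin k, IsDynamicColoring (H.comap e) c) ↔
      ∃ c : W → Fin k, IsDynamicColoring H c := by
  constructor
  · rintro ⟨c, hc, hd⟩
    refine ⟨c ∘ e.symm, fun u v huv => hc (by simpa using huv), fun v hv => ?_⟩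
    obtain ⟨u, w, hu, hw, h⟩ := hd (e.symm v) (by rw [deg_comap]; simpa using hv)
    exact ⟨e u, e w, by simpa using hu, by simpa using hw, by simpa using h⟩
  · rintro ⟨c, hc, hd⟩
    refine ⟨c ∘ e, fun u v huv => hc huv, fun v hv => ?_⟩
    obtain ⟨u, w, hu, hw, h⟩ := hd (e v) (by rwa [deg_comap] at hv)
    exact ⟨e.symm u, e.symm w, by simpa using hu, by simpa using hw, by simpa using h⟩

lemma exists_fin_copy {W : Type*} [Finite W] (H : SimpleGraph W) :
    ∃ (n : ℕ) (G : SimpleGraph (Fin n)), minDeg G = minDeg H ∧ maxDeg G = maxDeg H ∧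
      dynChromNum G = dynChromNum H ∧ chromNum G = chromNum H := by
  obtain ⟨n, ⟨f⟩⟩ := Finite.exists_equiv_fin W
  let e := f.symm
  have hdeg : ∀ d, (∃ v, deg (H.comap e) v = d) ↔ ∃ v, deg H v = d := fun d => by
    simp only [deg_comap]
    exact e.surjective.exists (p := fun v => deg H v = d) |>.symm
  have hcol : ∀ m, (H.comap e).Colorable m ↔ H.Colorable m := fun m =>
    ⟨fun h => h.of_hom (SimpleGraph.Iso.comap e H).symm.toHom,
      fun h => h.of_hom (SimpleGraph.Iso.comap e H).toHom⟩
  refine ⟨n, H.comap e, ?_, ?_, ?_, ?_⟩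
  · simp only [minDeg, hdeg]
  · simp only [maxDeg, hdeg]
  · simp only [dynChromNum, exists_dynamic_comap_iff]
  · simp only [chromNum, hcol]

/-! ### The graph and its degrees -/

/-- The complete multipartite graph with parts `P i = {(i, inl x)}`, `i : Fin k`, of size `b`,
together with independent sets `Q i = {(i, inr y)}` of size `t`, each vertex of `Q i` being
joined to exactly the vertices of `P i`. -/
def blowup (k b t : ℕ) : SimpleGraph (Fin k × (Fin b ⊕ Fin t)) where
  Adj u v := match u, v with
    | (i, Sum.inl _), (j, Sum.inl _) => i ≠ j
    | (i, Sum.inl _), (j, Sum.inr _) => i = j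
    | (i, Sum.inr _), (j, Sum.inl _) => i = j
    | (_, Sum.inr _), (_, Sum.inr _) => False
  symm := ⟨by
    rintro ⟨i, x | x⟩ ⟨j, y | y⟩ h
    · exact Ne.symm h
    · exact Eq.symm h
    · exact Eq.symm h
    · exact h⟩
  loopless := ⟨by
    rintro ⟨i, x | x⟩ h
    · exact h rfl
    · exact h⟩

section
variable {k b t : ℕ}

lemma blowup_PP {i j : Fin k} {x y : Fin b} :
    (blowup k b t).Adj (i, Sum.inl x) (j, Sum.inl y) ↔ i ≠ j := Iff.rfl

lemma blowup_PQ {i j : Fin k} {x : Fin b} {y : Fin t} :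
    (blowup k b t).Adj (i, Sum.inl x) (j, Sum.inr y) ↔ i = j := Iff.rfl

lemma blowup_QP {i j : Fin k} {x : Fin b} {y : Fin t} :
    (blowup k b t).Adj (i, Sum.inr y) (j, Sum.inl x) ↔ i = j := Iff.rfl

lemma blowup_QQ {i j : Fin k} {x y : Fin t} :
    ¬ (blowup k b t).Adj (i, Sum.inr x) (j, Sum.inr y) := id

lemma deg_blowup_inr (i : Fin k) (y : Fin t) : deg (blowup k b t) (i, Sum.inr y) = b := by
  have h : (blowup k b t).neighborSet (i, Sum.inr y) =
      (fun x : Fin b => ((i, Sum.inl x) : Fin k × (Fin b ⊕ Fin t))) '' Set.univ := by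
    ext ⟨j, x | x⟩
    · simp [blowup_QP]
    · simp [blowup_QQ]
  rw [deg, h, Set.ncard_image_of_injective _ (fun x y h => by simpa using h), Set.ncard_univ]
  simp

lemma deg_blowup_inl (i : Fin k) (x : Fin b) :
    deg (blowup k b t) (i, Sum.inl x) = (k - 1) * b + t := by
  let f : ({j : Fin k // j ≠ i} × Fin b) ⊕ Fin t → Fin k × (Fin b ⊕ Fin t) :=
    Sum.elim (fun p => (p.1, Sum.inl p.2)) (fun y => (i, Sum.inr y))
  have hf : Function.Injective f := by
    rintro (⟨⟨j, hj⟩, y⟩ | y) (⟨⟨j', hj'⟩, y'⟩ | y') h <;> simp_all [f]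
  have h : (blowup k b t).neighborSet (i, Sum.inl x) = f '' Set.univ := by
    ext ⟨j, y | y⟩
    · simp [f, blowup_PP, eq_comm]
    · simp [f, blowup_PQ]
  rw [deg, h, Set.ncard_image_of_injective _ hf, Set.ncard_univ]
  simp

lemma setOf_deg_blowup (hk : 0 < k) (hb : 0 < b) (ht : 0 < t) :
    {d | ∃ v, deg (blowup k b t) v = d} = {b, (k - 1) * b + t} := by
  ext d
  constructor
  · rintro ⟨⟨i, x | x⟩, rfl⟩
    · simp [deg_blowup_inl]
    · simp [deg_blowup_inr]
  · rintro (rfl | rfl)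
    · exact ⟨(⟨0, hk⟩, Sum.inr ⟨0, ht⟩), deg_blowup_inr _ _⟩
    · exact ⟨(⟨0, hk⟩, Sum.inl ⟨0, hb⟩), deg_blowup_inl _ _⟩

/-! ### The two chromatic numbers -/

lemma chromNum_blowup (hk : 2 ≤ k) (hb : 0 < b) : chromNum (blowup k b t) = k := by
  have : Nontrivial (Fin k) := Fin.nontrivial_iff_two_le.2 hk
  -- a color for `Q i`: any color other than that of `P i`
  choose g hg using fun i : Fin k => exists_ne i
  refine le_antisymm (Nat.sInf_le ?_) (le_csInf ⟨k, ?_⟩ ?_)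
  iterate 2
    refine ⟨SimpleGraph.Coloring.mk (fun v => Sum.elim (fun _ => v.1) (fun _ => g v.1) v.2) ?_⟩
    rintro ⟨i, x | x⟩ ⟨j, y | y⟩ h
    · exact h
    · obtain rfl := blowup_PQ.1 h
      exact (hg i).symm
    · obtain rfl := blowup_QP.1 h
      exact hg i
    · exact absurd h blowup_QQ
  rintro n ⟨c⟩
  have hinj : Function.Injective (fun i : Fin k => c (i, Sum.inl ⟨0, hb⟩)) := by
    intro i j hij
    by_contra hne
    exact c.valid (blowup_PP.2 hne) hij
  simpa using Fintype.card_le_of_injective _ hinj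

lemma exists_dynamic_blowup (hk : 2 ≤ k) (hb : 2 ≤ b) :
    ∃ c : Fin k × (Fin b ⊕ Fin t) → Fin (k * 2), IsDynamicColoring (blowup k b t) c := by
  have : Nontrivial (Fin k) := Fin.nontrivial_iff_two_le.2 hk
  choose g hg using fun i : Fin k => exists_ne i
  -- `P i` receives the colors `(i, 0)` and `(i, 1)`, and `Q i` a color of another part
  let c₀ : Fin k × (Fin b ⊕ Fin t) → Fin k × Fin 2 := fun v =>
    Sum.elim (fun x => (v.1, if x.1 = 0 then 0 else 1)) (fun _ => (g v.1, 0)) v.2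
  let x₀ : Fin b := ⟨0, by omega⟩
  let x₁ : Fin b := ⟨1, by omega⟩
  have h01 : ∀ j, c₀ (j, Sum.inl x₀) ≠ c₀ (j, Sum.inl x₁) := fun j => by simp [c₀, x₀, x₁]
  refine ⟨fun v => finProdFinEquiv (c₀ v), ?_, ?_⟩
  · rintro u v h heq
    have heq' := congrArg Prod.fst (finProdFinEquiv.injective heq)
    obtain ⟨i, x | x⟩ := u <;> obtain ⟨j, y | y⟩ := v
    · exact h heq'
    · obtain rfl := blowup_PQ.1 h
      exact hg i heq'.symm
    · obtain rfl := blowup_QP.1 h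
      exact hg i heq'
    · exact blowup_QQ h
  · rintro ⟨i, x | x⟩ -
    · exact ⟨(g i, Sum.inl x₀), (g i, Sum.inl x₁), (hg i).symm, (hg i).symm,
        finProdFinEquiv.injective.ne (h01 _)⟩
    · exact ⟨(i, Sum.inl x₀), (i, Sum.inl x₁), rfl, rfl, finProdFinEquiv.injective.ne (h01 _)⟩

/-- Each part `P i` shows two colors, and no color occurs in two parts. -/
lemma le_of_dynamic_blowup (hb : 2 ≤ b) (ht : 0 < t) {n : ℕ}
    (c : Fin k × (Fin b ⊕ Fin t) → Fin n) (hc : IsDynamicColoring (blowup k b t) c) :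
    k * 2 ≤ n := by
  have key : ∀ i : Fin k, ∃ f : Fin 2 → Fin b,
      c (i, Sum.inl (f 0)) ≠ c (i, Sum.inl (f 1)) := by
    intro i
    obtain ⟨⟨j, x | x⟩, ⟨j', y | y⟩, hu, hw, h⟩ :=
      hc.2 (i, Sum.inr ⟨0, ht⟩) (by rwa [deg_blowup_inr])
    · obtain rfl := blowup_QP.1 hu
      obtain rfl := blowup_QP.1 hw
      exact ⟨![x, y], by simpa using h⟩
    · exact absurd hw blowup_QQ
    · exact absurd hu blowup_QQ
    · exact absurd hu blowup_QQ
  choose f hf using key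
  have hinj : Function.Injective
      (fun p : Fin k × Fin 2 => c (p.1, Sum.inl (f p.1 p.2))) := by
    rintro ⟨i, p⟩ ⟨j, q⟩ h
    by_cases hij : i = j
    · subst hij
      have h1 := hf i
      have h2 := h1.symm
      fin_cases p <;> fin_cases q <;> simp_all
    · exact absurd h (hc.1 (blowup_PP.2 hij))
  simpa using Fintype.card_le_of_injective _ hinj

lemma dynChromNum_blowup (hk : 2 ≤ k) (hb : 2 ≤ b) (ht : 0 < t) :
    dynChromNum (blowup k b t) = k * 2 :=
  le_antisymm (Nat.sInf_le (exists_dynamic_blowup hk hb))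
    (le_csInf ⟨_, exists_dynamic_blowup hk hb⟩
      fun _ ⟨c, hc⟩ => le_of_dynamic_blowup hb ht c hc)

end

/-- For all `a ≥ b ≥ 2` there is a finite simple graph `G` with `δ(G) = b`,
`Δ(G) = a + 1` and `χ₂(G) − χ(G) = ⌈Δ(G)/δ(G)⌉`. -/
theorem stmt9 (a b : ℕ) (hba : b ≤ a) (hb : 2 ≤ b) :
    ∃ (n : ℕ) (G : SimpleGraph (Fin n)),
      minDeg G = b ∧ maxDeg G = a + 1 ∧
      dynChromNum G - chromNum G = ⌈(maxDeg G : ℝ) / (minDeg G : ℝ)⌉₊ := by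
  have hk : 2 ≤ a / b + 1 := by
    have := Nat.div_pos hba (by omega)
    omega
  obtain ⟨n, G, hmin, hmax, hdyn, hchr⟩ := exists_fin_copy (blowup (a / b + 1) b (a % b + 1))
  have hset := setOf_deg_blowup (k := a / b + 1) (b := b) (t := a % b + 1)
    (by omega) (by omega) (by omega)
  have hdiv : b * (a / b) + a % b = a := Nat.div_add_mod a b
  have hmod : a % b < b := Nat.mod_lt _ (by omega)
  have hdeg : (a / b + 1 - 1) * b + (a % b + 1) = a + 1 := by
    rw [Nat.add_sub_cancel, mul_comm]
    omega
  rw [hdeg] at hset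
  have h1 : minDeg G = b := by
    rw [hmin, minDeg, hset, csInf_pair]
    exact min_eq_left (by omega)
  have h2 : maxDeg G = a + 1 := by
    rw [hmax, maxDeg, hset, csSup_pair]
    exact max_eq_right (by omega)
  refine ⟨n, G, h1, h2, ?_⟩
  rw [hdyn, hchr, dynChromNum_blowup hk hb (by omega), chromNum_blowup hk (by omega), h1, h2]
  have hbpos : (0 : ℝ) < b := by exact_mod_cast (by omega : 0 < b)
  symm
  have hk2 : (a / b + 1) * 2 - (a / b + 1) = a / b + 1 := by omega
  rw [hk2, Nat.ceil_eq_iff (by omega), lt_div_iff₀ hbpos, div_le_iff₀ hbpos]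
  rw [Nat.add_sub_cancel]
  constructor
  · have : a / b * b < a + 1 := by
      rw [mul_comm]
      omega
    exact_mod_cast this
  · have : a + 1 ≤ (a / b + 1) * b := by
      rw [add_mul, mul_comm]
      omega
    exact_mod_cast this
end

section
/- Let G be a finite simple graph with at least one edge, and let T₁ be an independent set of vertices of G. Then there exists a set T₂ of vertices such that T₂ is independent, every vertex of T₁ is either in T₂ or adjacent to a vertex of T₂, and |T₁ ∩ T₂| ≤ ((2Δ(G) − δ(G))/(2Δ(G))) · |T₁|. -/
/-!
Let `δ`, `Δ` be the minimum and maximum degree. It suffices to find an independent set `I` outside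
`T₁` such that at least `δ / (2Δ) · |T₁|` vertices of `T₁` have a neighbor in `I`: then
`T₂ = I ∪ {v ∈ T₁ | v has no neighbor in I}` works.

Such an `I` is found greedily (`exists_indep_cover`). Let `A` be the set of vertices of `T₁` not yet
covered and `B` the set of vertices outside `T₁` that can still be chosen. Choose `u ∈ B` with the
largest number `d` of neighbors in `A`, then delete these `d` neighbors from `A`, and `u` together
with its neighbors from `B`. The `d` vertices leaving `A` meet at most `dΔ` of the edges between
`A` and `B`; the edges at `u` are among these. The at most `Δ` neighbors of `u` leaving `B` have at
most `d` neighbors in `A` each, by the choice of `u`, so they too meet at most `dΔ` such edges.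
Thus each newly covered vertex costs at most `2Δ` edges. Since `T₁` is independent, there are at
least `δ |T₁|` edges between `T₁` and its complement, so at least `δ |T₁| / (2Δ)` vertices get
covered.
-/

open SimpleGraph

variable {V : Type*}

open Finset in
open scoped Classical in
lemma card_interedges_eq_sum (G : SimpleGraph V) (A B : Finset V) :
    #(G.interedges A B) = ∑ a ∈ A, #{b ∈ B | G.Adj a b} := by
  rw [SimpleGraph.interedges, Rel.interedges, Finset.card_filter, Finset.sum_product]
  simp only [Finset.card_filter]

open Finset in
open scoped Classical in
/-- The greedy choice: if all degrees are at most `D`, some independent `I ⊆ B` covers at least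
`e(A, B) / (2D)` vertices of `A`. -/
lemma exists_indep_cover (G : SimpleGraph V) (D : ℕ)
    (hD : ∀ (v : V) (B : Finset V), #{b ∈ B | G.Adj v b} ≤ D) (A B : Finset V) :
    ∃ I ⊆ B, ((I : Set V).Pairwise fun u v => ¬ G.Adj u v) ∧
      #(G.interedges A B) ≤ 2 * D * #{a ∈ A | ∃ u ∈ I, G.Adj a u} := by
  induction B using Finset.strongInduction generalizing A with
  | H B ih =>
    rcases B.eq_empty_or_nonempty with rfl | hB
    · exact ⟨∅, by simp, by simp, by simp [card_interedges_eq_sum]⟩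
    obtain ⟨u, huB, hu⟩ := B.exists_max_image (fun b => #{a ∈ A | G.Adj b a}) hB
    have hss : {b ∈ B | b ≠ u ∧ ¬ G.Adj u b} ⊂ B :=
      Finset.filter_ssubset.2 ⟨u, huB, by simp⟩
    obtain ⟨I, hIB, hI, hcard⟩ := ih _ hss {a ∈ A | ¬ G.Adj u a}
    have hI' : ∀ x ∈ I, x ∈ B ∧ x ≠ u ∧ ¬ G.Adj u x := fun x hx => by
      simpa using hIB hx
    refine ⟨insert u I, ?_, ?_, ?_⟩
    · intro x hx
      rcases Finset.mem_insert.1 hx with rfl | hx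
      · exact huB
      · exact (hI' x hx).1
    · rw [Finset.coe_insert, Set.pairwise_insert]
      exact ⟨hI, fun b hb _ => ⟨(hI' b hb).2.2, fun h => (hI' b hb).2.2 h.symm⟩⟩
    · have hsub : G.interedges A B ⊆
          G.interedges {a ∈ A | ¬ G.Adj u a} {b ∈ B | b ≠ u ∧ ¬ G.Adj u b} ∪
            (G.interedges {a ∈ A | G.Adj u a} B ∪ G.interedges A {b ∈ B | G.Adj u b}) := by
        rintro ⟨a, b⟩ hab
        simp only [Finset.mem_union, SimpleGraph.mem_interedges_iff, Finset.mem_filter] at hab ⊢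
        obtain ⟨ha, hb, hadj⟩ := hab
        by_cases h1 : G.Adj u a
        · tauto
        by_cases h2 : G.Adj u b
        · tauto
        have h3 : b ≠ u := by
          rintro rfl
          exact h1 hadj.symm
        tauto
      have e1 : #(G.interedges {a ∈ A | G.Adj u a} B) ≤ #{a ∈ A | G.Adj u a} * D := by
        rw [card_interedges_eq_sum]
        exact Finset.sum_le_card_nsmul _ _ _ fun a _ => hD a B
      have e2 : #(G.interedges A {b ∈ B | G.Adj u b}) ≤ D * #{a ∈ A | G.Adj u a} := by
        have hcomm : #(G.interedges A {b ∈ B | G.Adj u b})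
            = #(G.interedges {b ∈ B | G.Adj u b} A) :=
          haveI := G.symm
          Rel.card_interedges_comm _ _
        rw [hcomm, card_interedges_eq_sum]
        refine (Finset.sum_le_card_nsmul _ _ #{a ∈ A | G.Adj u a}
          fun b hb => hu b (Finset.mem_filter.1 hb).1).trans ?_
        exact Nat.mul_le_mul_right _ (hD u B)
      have e3 : #{a ∈ A | G.Adj u a} + #{a ∈ {a ∈ A | ¬ G.Adj u a} | ∃ x ∈ I, G.Adj a x}
          ≤ #{a ∈ A | ∃ x ∈ insert u I, G.Adj a x} := by
        rw [← Finset.card_union_of_disjoint]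
        · apply Finset.card_le_card
          intro a
          simp only [Finset.mem_union, Finset.mem_filter, Finset.mem_insert]
          rintro (⟨ha, h⟩ | ⟨⟨ha, -⟩, x, hx, h⟩)
          · exact ⟨ha, u, Or.inl rfl, h.symm⟩
          · exact ⟨ha, x, Or.inr hx, h⟩
        · rw [Finset.disjoint_left]
          intro a
          simp only [Finset.mem_filter]
          tauto
      have e0 := (Finset.card_le_card hsub).trans
        ((Finset.card_union_le _ _).trans
          (Nat.add_le_add_left (Finset.card_union_le _ _) _))
      have e4 := Nat.mul_le_mul_left (2 * D) e3
      nlinarith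

/-- If `G` has an edge and `T₁` is an independent set, then there is an independent
dominating set `T₂` for `T₁` with `|T₁ ∩ T₂| ≤ ((2Δ(G) − δ(G))/(2Δ(G))) · |T₁|`. -/
theorem stmt10 [Fintype V] (G : SimpleGraph V) (he : ∃ u v, G.Adj u v)
    (T₁ : Set V) (hT₁ : T₁.Pairwise fun u v => ¬ G.Adj u v) :
    ∃ T₂ : Set V, (T₂.Pairwise fun u v => ¬ G.Adj u v) ∧
      (∀ v ∈ T₁, v ∈ T₂ ∨ ∃ u ∈ T₂, G.Adj v u) ∧
      ((T₁ ∩ T₂).ncard : ℝ) ≤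
        ((2 * (maxDeg G : ℝ) - (minDeg G : ℝ)) / (2 * (maxDeg G : ℝ))) * (T₁.ncard : ℝ) := by
  classical
  have hdeg : ∀ v, deg G v = (Finset.univ.filter fun b => G.Adj v b).card := fun v => by
    rw [deg, ← Set.ncard_coe_finset]
    congr 1
    ext b
    simp
  have hmax : ∀ v, deg G v ≤ maxDeg G := fun v =>
    le_csSup (Set.finite_range (deg G)).bddAbove ⟨v, rfl⟩
  have hmin : ∀ v, minDeg G ≤ deg G v := fun v => Nat.sInf_le ⟨v, rfl⟩
  have hpos : 0 < maxDeg G := by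
    obtain ⟨u, v, huv⟩ := he
    refine lt_of_lt_of_le ?_ (hmax u)
    rw [hdeg, Finset.card_pos]
    exact ⟨v, by simpa using huv⟩
  obtain ⟨I, hIB, hI, hcard⟩ := exists_indep_cover G (maxDeg G)
    (fun v B => (Finset.card_le_card (Finset.filter_subset_filter _ (Finset.subset_univ B))).trans
      ((hdeg v).symm.le.trans (hmax v))) T₁.toFinset (Finset.univ.filter fun b => b ∉ T₁)
  have hI' : ∀ x ∈ I, x ∉ T₁ := fun x hx => by simpa using hIB hx
  -- An edge leaving a vertex of the independent set `T₁` ends outside `T₁`.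
  have hlow : T₁.toFinset.card * minDeg G ≤
      (G.interedges T₁.toFinset (Finset.univ.filter fun b => b ∉ T₁)).card := by
    rw [card_interedges_eq_sum]
    refine Finset.card_nsmul_le_sum _ _ _ fun a ha => (hmin a).trans ?_
    rw [hdeg]
    apply Finset.card_le_card
    intro b hb
    simp only [Finset.mem_filter, Finset.mem_univ, true_and, Set.mem_toFinset] at hb ha ⊢
    exact ⟨fun hbT => hT₁ ha hbT hb.ne hb, hb⟩
  refine ⟨(I : Set V) ∪ {v ∈ T₁ | ¬ ∃ u ∈ I, G.Adj v u}, ?_, ?_, ?_⟩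
  · rintro x (hx | hx) y (hy | hy) hxy hadj
    · exact hI hx hy hxy hadj
    · exact hy.2 ⟨x, hx, hadj.symm⟩
    · exact hx.2 ⟨y, hy, hadj⟩
    · exact hT₁ hx.1 hy.1 hxy hadj
  · intro v hv
    by_cases h : ∃ u ∈ I, G.Adj v u
    · obtain ⟨u, hu, hvu⟩ := h
      exact Or.inr ⟨u, Or.inl hu, hvu⟩
    · exact Or.inl (Or.inr ⟨hv, h⟩)
  · have hinter : T₁ ∩ ((I : Set V) ∪ {v ∈ T₁ | ¬ ∃ u ∈ I, G.Adj v u})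
        = ↑(T₁.toFinset.filter fun v => ¬ ∃ u ∈ I, G.Adj v u) := by
      ext v
      have := hI' v
      simp only [Set.mem_inter_iff, Set.mem_union, Set.mem_ofPred_eq, Finset.coe_filter,
        Set.mem_toFinset, Finset.mem_coe]
      tauto
    rw [hinter, Set.ncard_coe_finset, Set.ncard_eq_toFinset_card' T₁]
    have hsplit := Finset.card_filter_add_card_filter_not (s := T₁.toFinset)
      (fun v => ∃ u ∈ I, G.Adj v u)
    have hD : (0 : ℝ) < 2 * maxDeg G := by positivity
    rw [div_mul_eq_mul_div, le_div_iff₀ hD]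
    have h1 := hlow.trans hcard
    have h1' : (T₁.toFinset.card : ℝ) * minDeg G ≤
        2 * maxDeg G * (T₁.toFinset.filter fun v => ∃ u ∈ I, G.Adj v u).card := by
      exact_mod_cast h1
    have h2' : ((T₁.toFinset.filter fun v => ∃ u ∈ I, G.Adj v u).card : ℝ) +
        (T₁.toFinset.filter fun v => ¬ ∃ u ∈ I, G.Adj v u).card = T₁.toFinset.card := by
      exact_mod_cast hsplit
    rw [← h2'] at h1' ⊢
    linarith
end

section
/- Let G be a finite simple graph with minimum degree δ(G) ≥ 2, and let T be an independent set of vertices of G. Then there exists a coloring of the vertices of T with ⌈(4·Δ(G)²)^(1/(δ(G)−1))⌉ colors such that every vertex u of G all of whose neighbors lie in T has at least two distinct colors among its neighbors. -/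
/-!
The colour classes on `T` are obtained by restricting a colouring of all of `V` in which no
neighbourhood is monochromatic; such a colouring exists with `k = ⌈(4Δ²)^(1/(δ-1))⌉` colours.

Instead of the Lovász local lemma, the proof uses a counting induction. For `S ⊆ V`, let `F S` be
the number of maps `V → Fin k` for which no neighbourhood contained in `S` is monochromatic. The
claim is `F (S ∪ {v}) ≥ (1 - 1/(2Δ)) F S` for `v ∉ S`. A map counted by `F S` but not by
`F (S ∪ {v})` is constant on some neighbourhood `N ∋ v` with `N ⊆ S ∪ {v}`; it is also counted by
`F (S \ N)`, a condition that does not involve the colours on `N`, so there are at most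
`F (S \ N) / k ^ (|N| - 1) ≤ F (S \ N) / (4Δ²)` of these (`card_mono_mul_le`). By induction and
Bernoulli's inequality, `F S ≥ (1 - 1/(2Δ)) ^ (|N| - 1) F (S \ N) ≥ F (S \ N) / 2`, so each of the
at most `Δ` neighbourhoods containing `v` destroys at most `F S / (2Δ²)` maps, in total at most
`F S / (2Δ)` (`step`). Hence `F V > 0`.
-/

open SimpleGraph

variable {V : Type*}

/-- No edge of the hypergraph `N` that is contained in `S` is monochromatic under `c`. -/
def GoodOn {ι : Type*} {k : ℕ} (N : ι → Finset V) (S : Finset V) (c : V → Fin k) : Prop :=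
  ∀ u, N u ⊆ S → ∃ x ∈ N u, ∃ y ∈ N u, c x ≠ c y

open Classical in
/-- The number of colourings of all of `V` that are good on `S`; the colours outside `S` are
unconstrained. -/
noncomputable def numGood {ι : Type*} [Fintype V] (k : ℕ) (N : ι → Finset V) (S : Finset V) : ℕ :=
  (Finset.univ.filter fun c : V → Fin k => GoodOn N S c).card

open Classical in
/-- Being good on a set `A` disjoint from `M` is independent of the colours on `M`: recolouring
`M \ {v}` arbitrarily turns each colouring that is constant on `M` into `k ^ (|M| - 1)` good ones,
and the original colouring can be recovered from the colour of `v`. -/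
lemma card_mono_mul_le {ι : Type*} [Fintype V] {k : ℕ} (N : ι → Finset V) (A M : Finset V)
    (hAM : Disjoint A M) {v : V} (hv : v ∈ M) :
    (Finset.univ.filter fun c : V → Fin k => GoodOn N A c ∧ ∀ x ∈ M, c x = c v).card *
      k ^ (M.card - 1) ≤ numGood k N A := by
  have hcard : (Finset.univ : Finset ({x // x ∈ M.erase v} → Fin k)).card
      = k ^ (M.card - 1) := by
    rw [Finset.card_univ, Fintype.card_fun, Fintype.card_coe, Fintype.card_fin,
      Finset.card_erase_of_mem hv]
  rw [← hcard, ← Finset.card_product, numGood]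
  refine Finset.card_le_card_of_injOn
    (fun p x => if h : x ∈ M.erase v then p.2 ⟨x, h⟩ else p.1 x) ?_ ?_
  · rintro ⟨c, f⟩ hp
    simp only [Finset.coe_product, Set.mem_prod, Finset.mem_coe, Finset.mem_filter,
      Finset.mem_univ, and_true, true_and] at hp
    simp only [Finset.coe_filter, Finset.mem_univ, true_and, Set.mem_ofPred_eq]
    intro u hu
    obtain ⟨x, hx, y, hy, hxy⟩ := hp.1 u hu
    have key : ∀ z ∈ N u, z ∉ M.erase v := fun z hz hz' =>
      Finset.disjoint_left.mp hAM (hu hz) (Finset.mem_of_mem_erase hz')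
    refine ⟨x, hx, y, hy, ?_⟩
    simpa only [dif_neg (key x hx), dif_neg (key y hy)] using hxy
  · rintro ⟨c, f⟩ hp ⟨c', f'⟩ hp' h
    simp only [Finset.coe_product, Set.mem_prod, Finset.mem_coe, Finset.mem_filter,
      Finset.mem_univ, and_true, true_and] at hp hp'
    have hf : f = f' := by
      funext x
      have := congrFun h x.1
      simpa only [dif_pos x.2] using this
    have hoff : ∀ x, x ∉ M.erase v → c x = c' x := by
      intro x hx
      have := congrFun h x
      simpa only [dif_neg hx] using this
    have hvv : c v = c' v := hoff v (by simp)
    have hc : c = c' := by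
      funext x
      by_cases hx : x ∈ M.erase v
      · have hxM := Finset.mem_of_mem_erase hx
        rw [hp.2 x hxM, hp'.2 x hxM, hvv]
      · exact hoff x hx
    rw [hc, hf]

open Classical in
/-- Iterating one-vertex growth bounds that are available below size `n`. -/
lemma chain (F : Finset V → ℝ) {q : ℝ} (hq : 0 ≤ q) (n : ℕ)
    (h : ∀ S : Finset V, S.card < n → ∀ v ∉ S, q * F S ≤ F (insert v S)) (A B : Finset V)
    (hAB : Disjoint A B) (hn : (A ∪ B).card ≤ n) : q ^ B.card * F A ≤ F (A ∪ B) := by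
  induction B using Finset.induction_on with
  | empty => simp
  | insert b B hb ih =>
    rw [Finset.disjoint_insert_right] at hAB
    have hb' : b ∉ A ∪ B := by simp [hb, hAB.1]
    rw [Finset.union_insert, Finset.card_insert_of_notMem hb'] at hn
    rw [Finset.union_insert, Finset.card_insert_of_notMem hb, pow_succ']
    calc q * q ^ B.card * F A = q * (q ^ B.card * F A) := by ring
      _ ≤ q * F (A ∪ B) := mul_le_mul_of_nonneg_left (ih hAB.2 (by omega)) hq
      _ ≤ _ := h _ (by omega) b hb'

open Classical in
/-- Extending the constrained set by one vertex keeps at least a `1 - 1/(2D)` fraction of the good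
colourings. -/
lemma step {ι : Type*} [Fintype ι] [Fintype V] {k D : ℕ} (N : ι → Finset V) (hD : 1 ≤ D)
    (hdeg : ∀ v, (Finset.univ.filter fun u => v ∈ N u).card ≤ D)
    (hN : ∀ u, (N u).card ≤ D) (hk : ∀ u, 4 * D ^ 2 ≤ k ^ ((N u).card - 1)) (n : ℕ) :
    ∀ S : Finset V, S.card = n → ∀ v ∉ S,
      (1 - 1 / (2 * (D : ℝ))) * (numGood k N S : ℝ) ≤ numGood k N (insert v S) := by
  have hD' : (1 : ℝ) ≤ D := by exact_mod_cast hD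
  have hq : 0 ≤ 1 - 1 / (2 * (D : ℝ)) := by
    rw [sub_nonneg, div_le_one (by linarith)]
    linarith
  induction n using Nat.strong_induction_on with
  | _ n ih =>
  intro S hS v hv
  set U : Finset ι := Finset.univ.filter fun u => v ∈ N u ∧ N u ⊆ insert v S with hU
  let bad : ι → Finset (V → Fin k) := fun u =>
    Finset.univ.filter fun c => GoodOn N S c ∧ ∀ x ∈ N u, c x = c v
  have hbad : ∀ u ∈ U, ((bad u).card : ℝ) ≤ numGood k N S / (2 * (D : ℝ) ^ 2) := by
    intro u hu
    rw [hU, Finset.mem_filter] at hu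
    obtain ⟨-, hvu, hus⟩ := hu
    set A := S \ N u with hA
    have hdisj : Disjoint A (N u) := Finset.sdiff_disjoint
    have h1 : (bad u).card * k ^ ((N u).card - 1) ≤ numGood k N A := by
      refine le_trans (Nat.mul_le_mul_right _ (Finset.card_le_card ?_))
        (card_mono_mul_le N A (N u) hdisj hvu)
      intro c hc
      simp only [bad, Finset.mem_filter, Finset.mem_univ, true_and] at hc ⊢
      exact ⟨fun w hw => hc.1 w (hw.trans Finset.sdiff_subset), hc.2⟩
    have hunion : A ∪ (N u).erase v = S := by
      ext x
      have := @hus x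
      simp only [Finset.mem_insert] at this
      simp only [hA, Finset.mem_union, Finset.mem_sdiff, Finset.mem_erase]
      constructor
      · rintro (h | h)
        · exact h.1
        · exact (this h.2).resolve_left h.1
      · intro hx
        by_cases hxu : x ∈ N u
        · exact Or.inr ⟨fun h => hv (h ▸ hx), hxu⟩
        · exact Or.inl ⟨hx, hxu⟩
    have h2 := chain (fun S => (numGood k N S : ℝ)) hq n (fun S' hS' => ih _ hS' S' rfl) A
      ((N u).erase v) (hdisj.mono_right (Finset.erase_subset _ _)) (by rw [hunion, hS])
    simp only [hunion, Finset.card_erase_of_mem hvu] at h2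
    have hbern : (1 / 2 : ℝ) ≤ (1 - 1 / (2 * (D : ℝ))) ^ ((N u).card - 1) := by
      have hb := one_add_mul_le_pow (a := -(1 / (2 * (D : ℝ)))) (by linarith) ((N u).card - 1)
      have hle : (((N u).card - 1 : ℕ) : ℝ) ≤ D := by
        exact_mod_cast (Nat.sub_le _ _).trans (hN u)
      have : (((N u).card - 1 : ℕ) : ℝ) * (1 / (2 * (D : ℝ))) ≤ 1 / 2 := by
        calc _ ≤ (D : ℝ) * (1 / (2 * (D : ℝ))) := by gcongr
          _ = 1 / 2 := by field_simp
      rw [← sub_eq_add_neg] at hb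
      linarith
    have h3 : ((bad u).card : ℝ) * (4 * (D : ℝ) ^ 2) ≤ numGood k N A := by
      exact_mod_cast (Nat.mul_le_mul_left _ (hk u)).trans h1
    have h4 : (1 / 2 : ℝ) * numGood k N A ≤ numGood k N S :=
      (mul_le_mul_of_nonneg_right hbern (Nat.cast_nonneg _)).trans h2
    rw [le_div_iff₀ (by positivity)]
    linarith
  have hcover : numGood k N S ≤ numGood k N (insert v S) + ∑ u ∈ U, (bad u).card := by
    refine le_trans (Finset.card_le_card (t := (Finset.univ.filter fun c : V → Fin k =>
      GoodOn N (insert v S) c) ∪ U.biUnion bad) ?_) ((Finset.card_union_le _ _).trans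
      (Nat.add_le_add_left Finset.card_biUnion_le _))
    intro c hc
    simp only [Finset.mem_filter, Finset.mem_univ, true_and] at hc
    simp only [Finset.mem_union, Finset.mem_filter, Finset.mem_univ, true_and,
      Finset.mem_biUnion]
    by_contra hcon
    push Not at hcon
    refine hcon.1 fun u hu => ?_
    by_contra hmono
    push Not at hmono
    have hvu : v ∈ N u := by
      by_contra hvu
      obtain ⟨x, hx, y, hy, hxy⟩ := hc u ((Finset.subset_insert_iff_of_notMem hvu).mp hu)
      exact hxy (hmono x hx y hy)
    exact hcon.2 u (by simp [hU, hvu, hu])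
      (by simpa [bad] using ⟨hc, fun x hx => hmono x hx v hvu⟩)
  have hUcard : (U.card : ℝ) ≤ D := by
    refine Nat.cast_le.mpr ((Finset.card_le_card ?_).trans (hdeg v))
    intro u hu
    rw [hU, Finset.mem_filter] at hu
    simp [hu.2.1]
  have hsum : (∑ u ∈ U, ((bad u).card : ℝ)) ≤ numGood k N S / (2 * (D : ℝ)) := by
    calc _ ≤ ∑ u ∈ U, (numGood k N S / (2 * (D : ℝ) ^ 2) : ℝ) := Finset.sum_le_sum hbad
      _ = U.card * (numGood k N S / (2 * (D : ℝ) ^ 2) : ℝ) := by simp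
      _ ≤ D * (numGood k N S / (2 * (D : ℝ) ^ 2) : ℝ) := by gcongr
      _ = _ := by field_simp
  have hcover' : (numGood k N S : ℝ) ≤ numGood k N (insert v S) + ∑ u ∈ U, ((bad u).card : ℝ) := by
    exact_mod_cast hcover
  have : (1 - 1 / (2 * (D : ℝ))) * (numGood k N S : ℝ)
      = numGood k N S - numGood k N S / (2 * (D : ℝ)) := by ring
  linarith

open Classical in
/-- A hypergraph with edge sizes and vertex degrees at most `D` has a colouring with `k` colours
and no monochromatic edge, provided `k ^ (|e| - 1) ≥ 4 D²` for every edge `e`. -/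
lemma exists_good {ι : Type*} [Fintype ι] [Fintype V] {k D : ℕ} (N : ι → Finset V) (hD : 1 ≤ D)
    (hk0 : 0 < k) (hdeg : ∀ v, (Finset.univ.filter fun u => v ∈ N u).card ≤ D)
    (hN : ∀ u, (N u).card ≤ D) (hk : ∀ u, 4 * D ^ 2 ≤ k ^ ((N u).card - 1)) :
    ∃ c : V → Fin k, ∀ u, ∃ x ∈ N u, ∃ y ∈ N u, c x ≠ c y := by
  have hD' : (1 : ℝ) ≤ D := by exact_mod_cast hD
  have hq : 0 < 1 - 1 / (2 * (D : ℝ)) := by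
    rw [sub_pos, div_lt_one (by linarith)]
    linarith
  have h := chain (fun S => (numGood k N S : ℝ)) hq.le (Finset.univ : Finset V).card
    (fun S _ => step N hD hdeg hN hk _ S rfl) ∅ Finset.univ (by simp) (by simp)
  -- No edge is empty, since `k ^ (0 - 1) = 1 < 4 D²`; so every colouring is good on `∅`.
  have h0 : 0 < numGood k N ∅ := by
    refine Finset.card_pos.mpr ⟨fun _ => ⟨0, hk0⟩, ?_⟩
    simp only [Finset.mem_filter, Finset.mem_univ, true_and]
    intro u hu
    have := hk u
    rw [Finset.subset_empty.mp hu] at this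
    simp at this
    nlinarith
  have h1 : (0 : ℝ) < numGood k N (∅ ∪ Finset.univ) :=
    lt_of_lt_of_le (mul_pos (pow_pos hq _) (Nat.cast_pos.mpr h0)) h
  obtain ⟨c, hc⟩ := Finset.card_pos.mp (Nat.cast_pos.mp h1)
  simp only [Finset.mem_filter, Finset.mem_univ, true_and] at hc
  exact ⟨c, fun u => hc u (by simp)⟩

/-- If `δ(G) ≥ 2` and `T` is an independent set, then the vertices of `T` can be colored
with `⌈(4Δ²)^(1/(δ−1))⌉` colors so that every vertex all of whose neighbors lie in `T`
has two differently colored neighbors. -/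
theorem stmt11 [Fintype V] (G : SimpleGraph V) (hδ : 2 ≤ minDeg G)
    (T : Set V) (hT : T.Pairwise fun u v => ¬ G.Adj u v) :
    ∃ c : T → Fin ⌈(4 * (maxDeg G : ℝ) ^ 2) ^ ((1 : ℝ) / ((minDeg G : ℝ) - 1))⌉₊,
      ∀ u : V, (∀ w, G.Adj u w → w ∈ T) →
        ∃ (x y : V) (hx : x ∈ T) (hy : y ∈ T),
          G.Adj u x ∧ G.Adj u y ∧ c ⟨x, hx⟩ ≠ c ⟨y, hy⟩ := by
  classical
  have hdle : ∀ v, deg G v ≤ maxDeg G := fun v =>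
    le_csSup (Set.finite_range (deg G)).bddAbove ⟨v, rfl⟩
  have hdge : ∀ v, minDeg G ≤ deg G v := fun v => Nat.sInf_le ⟨v, rfl⟩
  have hne : Nonempty V := by
    by_contra hcon
    rw [not_nonempty_iff] at hcon
    simp [minDeg] at hδ
  obtain ⟨v₀⟩ := hne
  have hD : 1 ≤ maxDeg G := by have := hdle v₀; have := hdge v₀; omega
  have hD' : (1 : ℝ) ≤ maxDeg G := by exact_mod_cast hD
  set k := ⌈(4 * (maxDeg G : ℝ) ^ 2) ^ ((1 : ℝ) / ((minDeg G : ℝ) - 1))⌉₊ with hkdef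
  have hx : (0 : ℝ) < 4 * (maxDeg G : ℝ) ^ 2 := by positivity
  have hk0 : 0 < k := Nat.ceil_pos.mpr (Real.rpow_pos_of_pos hx _)
  have hkpow : 4 * maxDeg G ^ 2 ≤ k ^ (minDeg G - 1) := by
    have h1 : (4 * (maxDeg G : ℝ) ^ 2) ≤ (k : ℝ) ^ (minDeg G - 1) := by
      have hcast : ((minDeg G - 1 : ℕ) : ℝ) = (minDeg G : ℝ) - 1 := by
        rw [Nat.cast_sub (by omega)]; simp
      calc (4 * (maxDeg G : ℝ) ^ 2)
          = ((4 * (maxDeg G : ℝ) ^ 2) ^ ((1 : ℝ) / ((minDeg G : ℝ) - 1))) ^ (minDeg G - 1) := by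
            rw [← hcast, one_div, Real.rpow_inv_natCast_pow hx.le (by omega)]
        _ ≤ _ := pow_le_pow_left₀ (Real.rpow_nonneg hx.le _) (Nat.le_ceil _) _
    exact_mod_cast h1
  have hcard : ∀ u, (G.neighborFinset u).card = deg G u := fun u => by
    rw [deg, Set.ncard_eq_toFinset_card', neighborFinset]
  obtain ⟨c, hc⟩ := exists_good (k := k) (D := maxDeg G) (fun u => G.neighborFinset u) hD hk0
    (fun v => by
      refine le_trans (Finset.card_le_card ?_) ((hcard v).trans_le (hdle v))
      intro u hu
      simpa [G.adj_comm] using hu)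
    (fun u => (hcard u).trans_le (hdle u))
    (fun u => hkpow.trans (Nat.pow_le_pow_right hk0 (by rw [hcard]; have := hdge u; omega)))
  refine ⟨fun x => c x.1, fun u hu => ?_⟩
  obtain ⟨x, hx, y, hy, hxy⟩ := hc u
  rw [mem_neighborFinset] at hx hy
  exact ⟨x, y, hu x hx, hu y hy, hx, hy, hxy⟩
end

section
/- Let c be a proper vertex coloring of a finite simple graph G using k colors. Then G has a dynamic coloring with at most k + |B_c| colors, where B_c is the set of vertices v of degree at least 2 all of whose neighbors receive the same color under c. -/
/-!
For each vertex `v ∈ B_c` pick a neighbor `f v`, and give every vertex of the image `S` of `B_c` under `f`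
its own fresh color, using at most `|B_c|` new colors. The new coloring refines `c`, so it is
still proper and every vertex outside `B_c` keeps two differently colored neighbors; a vertex
`v ∈ B_c` now sees the color of `f v`, which no other vertex has, and it has a second neighbor.
-/

open SimpleGraph

variable {V : Type*}

/-- If `c` is a proper `k`-coloring of `G`, then `G` has a dynamic coloring with at most
`k + |B_c|` colors, where `B_c` is the set of vertices of degree at least 2 all of whose
neighbors get the same color under `c`. -/
theorem stmt12 [Fintype V] (G : SimpleGraph V) (k : ℕ) (c : V → Fin k)
    (hc : ∀ ⦃u v⦄, G.Adj u v → c u ≠ c v) :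
    ∃ (m : ℕ) (c' : V → Fin m),
      m ≤ k + {v | 2 ≤ deg G v ∧ ∀ u w, G.Adj v u → G.Adj v w → c u = c w}.ncard ∧
      IsDynamicColoring G c' := by
  classical
  set B : Set V := {v | 2 ≤ deg G v ∧ ∀ u w, G.Adj v u → G.Adj v w → c u = c w} with hB
  have hnb : ∀ v, 2 ≤ deg G v → ∃ u w, G.Adj v u ∧ G.Adj v w ∧ u ≠ w := by
    intro v hv
    obtain ⟨u, hu, w, hw, huw⟩ := (Set.one_lt_ncard (Set.toFinite _)).1 hv
    exact ⟨u, w, hu, hw, huw⟩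
  have hf : ∀ v, ∃ u, 2 ≤ deg G v → G.Adj v u ∧ ∃ w, G.Adj v w ∧ u ≠ w := by
    intro v
    by_cases hv : 2 ≤ deg G v
    · obtain ⟨u, w, hu, hw, huw⟩ := hnb v hv
      exact ⟨u, fun _ => ⟨hu, w, hw, huw⟩⟩
    · exact ⟨v, fun h => absurd h hv⟩
  choose f hf using hf
  let S : Set V := f '' B
  let d : V → Fin k ⊕ S := fun x => if h : x ∈ S then Sum.inr ⟨x, h⟩ else Sum.inl (c x)
  have hdS : ∀ x y, x ∈ S → d x = d y → x = y := by
    intro x y hx h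
    by_cases hy : y ∈ S <;> simp_all [d]
  have hdc : ∀ x y, d x = d y → c x = c y := by
    intro x y h
    by_cases hx : x ∈ S
    · rw [hdS x y hx h]
    · by_cases hy : y ∈ S <;> simp_all [d]
  let e : Fin k ⊕ S ≃ Fin (Fintype.card (Fin k ⊕ S)) := Fintype.equivFin _
  refine ⟨Fintype.card (Fin k ⊕ S), fun x => e (d x), ?_, ?_, ?_⟩
  · rw [Fintype.card_sum, Fintype.card_fin, ← Nat.card_eq_fintype_card (α := S),
      Nat.card_coe_set_eq]
    exact Nat.add_le_add_left (Set.ncard_image_le (Set.toFinite B)) k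
  · intro u v huv h
    exact hc huv (hdc u v (e.injective h))
  · intro v hv
    by_cases hvB : v ∈ B
    · obtain ⟨hu, w, hw, hne⟩ := hf v hv
      exact ⟨f v, w, hu, hw, fun h => hne (hdS _ _ ⟨v, hvB, rfl⟩ (e.injective h))⟩
    · have : ∃ u w, G.Adj v u ∧ G.Adj v w ∧ c u ≠ c w := by
        by_contra! hcon
        exact hvB ⟨hv, hcon⟩
      obtain ⟨u, w, hu, hw, hne⟩ := this
      exact ⟨u, w, hu, hw, fun h => hne (hdc _ _ (e.injective h))⟩
end

section
/- Let c be a proper vertex coloring of a finite simple graph G, and let B_c be the set of vertices v of degree at least 2 all of whose neighbors receive the same color under c. Then the induced subgraph of G on B_c is bipartite. -/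
/-!
A vertex `v` of `B_c` has a single color `n(v)` on its neighborhood, and `n(v) ≠ c(v)`. If
`u, v ∈ B_c` are adjacent, then `n(u) = c(v)` and `n(v) = c(u)`, so exactly one of
`c(u) < n(u)` and `c(v) < n(v)` holds. The truth value of `c(v) < n(v)` is thus a proper
2-coloring of the subgraph induced on `B_c`.
-/

open SimpleGraph

variable {V : Type*}

/-- If `c` is a proper coloring of `G`, then the subgraph induced on `B_c` (the set of
vertices of degree at least 2 all of whose neighbors get the same color under `c`)
is bipartite. -/
theorem stmt13 [Fintype V] (G : SimpleGraph V) (k : ℕ) (c : V → Fin k)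
    (hc : ∀ ⦃u v⦄, G.Adj u v → c u ≠ c v) :
    (G.induce {v | 2 ≤ deg G v ∧ ∀ u w, G.Adj v u → G.Adj v w → c u = c w}).Colorable 2 := by
  classical
  -- For `v` in `B_c` the condition below says that the common color of its neighbors exceeds `c v`.
  refine (Coloring.mk (fun v => decide (∃ w, G.Adj v.1 w ∧ c v.1 < c w)) ?_ :
    (G.induce _).Coloring Bool).colorable
  rintro ⟨u, _, hu⟩ ⟨v, _, hv⟩ huv heq
  have h : G.Adj u v := huv
  have hiff : (∃ w, G.Adj u w ∧ c u < c w) ↔ ∃ w, G.Adj v w ∧ c v < c w := by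
    simpa using heq
  have h1 : (∃ w, G.Adj u w ∧ c u < c w) ↔ c u < c v :=
    ⟨fun ⟨w, hw, hlt⟩ => hu w v hw h ▸ hlt, fun hlt => ⟨v, h, hlt⟩⟩
  have h2 : (∃ w, G.Adj v w ∧ c v < c w) ↔ c v < c u :=
    ⟨fun ⟨w, hw, hlt⟩ => hv w u hw h.symm ▸ hlt, fun hlt => ⟨u, h.symm, hlt⟩⟩
  rw [h1, h2] at hiff
  rcases lt_or_gt_of_ne (hc h) with hlt | hlt
  · exact lt_asymm hlt (hiff.1 hlt)
  · exact lt_asymm hlt (hiff.2 hlt)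
end

section
/- If G is a finite simple graph, then there exists a proper vertex coloring c′ of G using at most χ(G) + 3 colors such that B_{c′} is an independent set, where B_{c′} is the set of vertices v of degree at least 2 all of whose neighbors receive the same color under c′. -/
/-!
Start from an optimal proper coloring `c₀`, and let `T` be a maximal independent set, `I` the set
of vertices outside `T` with all neighbors in `T`, and `J` the set of vertices of `T` with all
neighbors in `I`. Let `S ⊆ J` be a minimal set dominating every vertex of `I` that has a neighbor
in `J`. Keep `c₀` outside `T ∪ I`, give `T \ S` a new color, give `S` one old color (which is
harmless, since neighbors of `S` lie in `I`), and split `I` between two further new colors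
according to whether a vertex has exactly one neighbor in `S`.

A vertex outside `T ∪ I` sees both an old color and the color of `T \ S`, so an edge with two
monochromatic-neighborhood ends joins some `v ∈ I` to some `x ∈ T`. If `x ∉ J`, then `x` has
neighbors both inside and outside `I`. If `x ∈ J`, then `v` is dominated by `S`, so all neighbors
of `v` lie in `S`, and there are at least two of them; but by minimality `x ∈ S` also has a
neighbor in `I` whose only neighbor in `S` is `x`, and this neighbor has a color different from
that of `v`.
-/

open SimpleGraph

variable {V : Type*}

/-- A maximal independent set, in the form of independence together with domination. -/
lemma exists_indep_dominating [Finite V] (G : SimpleGraph V) :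
    ∃ T : Set V, (∀ u ∈ T, ∀ v ∈ T, ¬ G.Adj u v) ∧ ∀ v ∉ T, ∃ u ∈ T, G.Adj v u := by
  obtain ⟨T, hT, hmax⟩ :=
    (Set.toFinite {T : Set V | ∀ u ∈ T, ∀ v ∈ T, ¬ G.Adj u v}).exists_maximal ⟨∅, by simp⟩
  refine ⟨T, hT, fun v hv => ?_⟩
  by_contra! hno
  refine hv (hmax (y := insert v T) ?_ (Set.subset_insert v T) (Set.mem_insert v T))
  rintro a (rfl | ha) b (rfl | hb) hab
  · exact G.irrefl hab
  · exact hno b hb hab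
  · exact hno a ha hab.symm
  · exact hT a ha b hb hab

/-- A minimal subset of `J` dominating the vertices of `I` that `J` dominates: each of its
members has a private neighbor in `I`. -/
lemma exists_minimal_dominating [Finite V] (G : SimpleGraph V) (I J : Set V) :
    ∃ S ⊆ J, (∀ v ∈ I, ∀ x ∈ J, G.Adj v x → ∃ s ∈ S, G.Adj v s) ∧
      ∀ s ∈ S, ∃ p ∈ I, G.Adj p s ∧ ∀ t ∈ S, G.Adj p t → t = s := by
  obtain ⟨S, ⟨hSJ, hS⟩, hmin⟩ :=
    (Set.toFinite {S : Set V | S ⊆ J ∧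
      ∀ v ∈ I, ∀ x ∈ J, G.Adj v x → ∃ s ∈ S, G.Adj v s}).exists_minimal
      ⟨J, subset_rfl, fun v _ x hx h => ⟨x, hx, h⟩⟩
  refine ⟨S, hSJ, hS, fun s hs => ?_⟩
  by_contra! hno
  refine (hmin (y := S \ {s}) ⟨Set.sdiff_subset.trans hSJ, ?_⟩ Set.sdiff_subset hs).2 rfl
  intro v hv x hx hvx
  obtain ⟨t, ht, hvt⟩ := hS v hv x hx hvx
  by_cases hts : t = s
  · subst hts
    obtain ⟨r, hr, hvr, hne⟩ := hno v hv hvt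
    exact ⟨r, ⟨hr, hne⟩, hvr⟩
  · exact ⟨t, ⟨ht, hts⟩, hvt⟩

/-- The recoloring, with the old colors in the left summand and the new ones in the right one. -/
lemma exists_sum_coloring [Finite V] (G : SimpleGraph V) {α : Type*} (d : α) (c₀ : V → α)
    (hc₀ : ∀ u v, G.Adj u v → c₀ u ≠ c₀ v) :
    ∃ c : V → α ⊕ Fin 3, (∀ u v, G.Adj u v → c u ≠ c v) ∧
      ∀ u v, G.Adj u v →
        (2 ≤ deg G u ∧ ∀ x w, G.Adj u x → G.Adj u w → c x = c w) →
        (2 ≤ deg G v ∧ ∀ x w, G.Adj v x → G.Adj v w → c x = c w) → False := by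
  classical
  obtain ⟨T, hT, hdom⟩ := exists_indep_dominating G
  obtain ⟨I, hI⟩ : ∃ I : Set V, ∀ v, v ∈ I ↔ v ∉ T ∧ ∀ u, G.Adj v u → u ∈ T :=
    ⟨{v | _}, fun _ => Iff.rfl⟩
  obtain ⟨J, hJ⟩ : ∃ J : Set V, ∀ x, x ∈ J ↔ x ∈ T ∧ ∀ u, G.Adj x u → u ∈ I :=
    ⟨{v | _}, fun _ => Iff.rfl⟩
  obtain ⟨S, hSJ, hS, hpriv⟩ := exists_minimal_dominating G I J
  have hST : ∀ x ∈ S, x ∈ T := fun x hx => ((hJ x).1 (hSJ hx)).1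
  let P : V → Prop := fun v => ∃ s ∈ S, G.Adj v s ∧ ∀ t ∈ S, G.Adj v t → t = s
  let c : V → α ⊕ Fin 3 := fun v =>
    if v ∈ S then .inl d else if v ∈ T then .inr 0 else
      if v ∈ I then (if P v then .inr 1 else .inr 2) else .inl (c₀ v)
  have cS : ∀ v ∈ S, c v = .inl d := fun v h => if_pos h
  have cT : ∀ v ∈ T, v ∉ S → c v = .inr 0 := fun v h h' => by simp [c, h, h']
  have cP : ∀ v ∈ I, P v → c v = .inr 1 := fun v h h' => by
    have h1 := ((hI v).1 h).1
    have h2 : v ∉ S := fun h => h1 (hST v h)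
    simp [c, h, h', h1, h2]
  have cN : ∀ v ∈ I, ¬ P v → c v = .inr 2 := fun v h h' => by
    have h1 := ((hI v).1 h).1
    have h2 : v ∉ S := fun h => h1 (hST v h)
    simp [c, h, h', h1, h2]
  have cO : ∀ v, v ∉ T → v ∉ I → c v = .inl (c₀ v) := fun v h h' => by
    have h2 : v ∉ S := fun h2 => h (hST v h2)
    simp [c, h, h', h2]
  have cI : ∀ v ∈ I, c v = .inr 1 ∨ c v = .inr 2 := fun v h => by
    by_cases hp : P v
    · exact .inl (cP v h hp)
    · exact .inr (cN v h hp)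
  -- An edge whose first end is in `T`.
  have properT : ∀ u v, u ∈ T → G.Adj u v → c u ≠ c v := by
    intro u v hu huv
    have hv : v ∉ T := fun hv => hT u hu v hv huv
    by_cases huS : u ∈ S
    · have hvI := ((hJ u).1 (hSJ huS)).2 v huv
      rw [cS u huS]
      rcases cI v hvI with h | h <;> rw [h] <;> simp
    · rw [cT u hu huS]
      by_cases hvI : v ∈ I
      · rcases cI v hvI with h | h <;> rw [h] <;> simp
      · rw [cO v hv hvI]; simp
  -- Vertices outside `T ∪ I` see two colors.
  have goodO : ∀ u, u ∉ T → u ∉ I → ¬ ∀ x w, G.Adj u x → G.Adj u w → c x = c w := by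
    intro u huT huI hmono
    obtain ⟨x, hxT, hux⟩ := hdom u huT
    have hxS : x ∉ S := fun hx => huI (((hJ x).1 (hSJ hx)).2 u hux.symm)
    obtain ⟨w, huw, hwT⟩ : ∃ w, G.Adj u w ∧ w ∉ T := by
      by_contra! h
      exact huI ((hI u).2 ⟨huT, h⟩)
    have hwI : w ∉ I := fun h => huT (((hI w).1 h).2 u huw.symm)
    have := hmono x w hux huw
    rw [cT x hxT hxS, cO w hwT hwI] at this
    simp at this
  -- Edges between `I` and `T`.
  have key : ∀ v x, v ∈ I → x ∈ T → G.Adj v x → 2 ≤ deg G v →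
      (∀ y w, G.Adj v y → G.Adj v w → c y = c w) →
      (∀ y w, G.Adj x y → G.Adj x w → c y = c w) → False := by
    intro v x hv hx hvx hdeg hmv hmx
    by_cases hxJ : x ∈ J
    · obtain ⟨s, hs, hvs⟩ := hS v hv x hxJ hvx
      have hall : ∀ y, G.Adj v y → y ∈ S := by
        intro y hy
        by_contra hyS
        have := hmv s y hvs hy
        rw [cS s hs, cT y (((hI v).1 hv).2 y hy) hyS] at this
        simp at this
      have hnP : ¬ P v := by
        rintro ⟨t, ht, hvt, huniq⟩
        have hsub : G.neighborSet v ⊆ {t} := fun y hy => huniq y (hall y hy) hy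
        have hle := Set.ncard_le_ncard hsub (Set.toFinite _)
        rw [Set.ncard_singleton] at hle
        unfold deg at hdeg
        omega
      obtain ⟨p, hp, hpx, hpu⟩ := hpriv x (hall x hvx)
      have := hmx v p hvx.symm hpx.symm
      rw [cN v hv hnP, cP p hp ⟨x, hall x hvx, hpx, hpu⟩] at this
      simp at this
    · obtain ⟨w, hxw, hwI⟩ : ∃ w, G.Adj x w ∧ w ∉ I := by
        by_contra! h
        exact hxJ ((hJ x).2 ⟨hx, h⟩)
      have hwT : w ∉ T := fun h => hT x hx w h hxw
      have := hmx v w hvx.symm hxw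
      rw [cO w hwT hwI] at this
      rcases cI v hv with h | h <;> rw [h] at this <;> simp at this
  refine ⟨c, fun u v huv => ?_, fun u v huv hu hv => ?_⟩
  · by_cases huT : u ∈ T
    · exact properT u v huT huv
    by_cases hvT : v ∈ T
    · exact (properT v u hvT huv.symm).symm
    have huI : u ∉ I := fun h => hvT (((hI u).1 h).2 v huv)
    have hvI : v ∉ I := fun h => huT (((hI v).1 h).2 u huv.symm)
    rw [cO u huT huI, cO v hvT hvI]
    simpa using hc₀ u v huv
  · by_cases huT : u ∈ T
    · have hvT : v ∉ T := fun h => hT u huT v h huv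
      have hvI : v ∈ I := by_contra fun h => goodO v hvT h hv.2
      exact key v u hvI huT huv.symm hv.1 hv.2 hu.2
    · have huI : u ∈ I := by_contra fun h => goodO u huT h hu.2
      exact key u v huI (((hI u).1 huI).2 v huv) huv hu.1 hu.2 hv.2

/-- Every finite simple graph `G` has a proper coloring `c` with at most `χ(G) + 3` colors
such that `B_c` is an independent set. -/
theorem stmt14 [Fintype V] (G : SimpleGraph V) :
    ∃ (m : ℕ) (c : V → Fin m), m ≤ chromNum G + 3 ∧
      (∀ ⦃u v⦄, G.Adj u v → c u ≠ c v) ∧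
      ({v | 2 ≤ deg G v ∧ ∀ u w, G.Adj v u → G.Adj v w → c u = c w}).Pairwise
        (fun u v => ¬ G.Adj u v) := by
  cases isEmpty_or_nonempty V with
  | inl h =>
    exact ⟨0, fun v => h.elim v, Nat.zero_le _, fun u => h.elim u, fun u => h.elim u⟩
  | inr h =>
    have hcol : G.Colorable (chromNum G) :=
      Nat.sInf_mem (s := {n | G.Colorable n}) ⟨_, G.colorable_of_fintype⟩
    obtain ⟨C⟩ := hcol
    obtain ⟨c, hc, hB⟩ := exists_sum_coloring G (C h.some) C (fun u v huv => C.valid huv)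
    refine ⟨chromNum G + 3, fun v => finSumFinEquiv (c v), le_rfl, fun u v huv => ?_, ?_⟩
    · simpa using hc u v huv
    · intro u hu v hv _ huv
      simp only [Set.mem_ofPred_eq, EmbeddingLike.apply_eq_iff_eq] at hu hv
      exact hB u v huv hu hv
end

section
/- If G is a finite simple graph with minimum degree δ(G) ≥ 2, then χ₂(G) ≤ ⌈(4·Δ(G)²)^(1/(δ(G)−1))⌉ · χ(G). -/
/-!
Take a proper coloring with `χ(G)` colors and pair it with an auxiliary coloring by
`r = ⌈(4Δ²)^(1/(δ-1))⌉` colors in which no neighborhood is monochromatic; the pair is a dynamic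
coloring with `r · χ(G)` colors.

The auxiliary coloring is found by counting (`exists_no_mono`), in place of the Lovász local lemma.
Put `k = δ - 1`, so that `r ^ k ≥ 4Δ²`, and choose in each neighborhood of `v` a set `F v` of
exactly `k + 1` vertices; each vertex is in at most `Δ` of these sets. Let `N(S)` be the number of
all colorings `V → Fin r` in which no `F v ⊆ S` is monochromatic, and `q = 1 - 1/(2k)`. The claim
(`pow_mul_card_le`) is that `N(S) ≥ q ^ |S \ T| · N(T)` for `T ⊆ S`, by induction on `S`.
When `x` is added to `S`, the colorings lost are monochromatic on some `F v` containing `x`. For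
fixed `v` there are at most `r ^ (-k) · N(S \ F')` of these, where `F'` is `F v` without one vertex
other than `x` (`card_mono_mul_le`). By induction this is at most
`r ^ (-k) · q ^ (-(k-1)) · N(S) ≤ N(S) / (2Δ²)`, because `q ^ (k-1) ≥ 1/2` by Bernoulli. Summing over
at most `Δ` sets, at most `N(S) / (2Δ) ≤ N(S) / (2k)` colorings are lost.
As `N(∅) = r ^ |V| > 0`, also `N(V) > 0`.
-/

open SimpleGraph

variable {V : Type*}

open Classical in
/-- The colorings with `r` colors in which no set `F v` contained in `S` is monochromatic.
All vertices are colored, including those outside `S`. -/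
noncomputable def goodColorings [Fintype V] (F : V → Finset V) (r : ℕ) (S : Finset V) :
    Finset (V → Fin r) :=
  Finset.univ.filter fun c => ∀ v, F v ⊆ S → ∃ u ∈ F v, ∃ w ∈ F v, c u ≠ c w

lemma mem_goodColorings [Fintype V] {F : V → Finset V} {r : ℕ} {S : Finset V} {c : V → Fin r} :
    c ∈ goodColorings F r S ↔ ∀ v, F v ⊆ S → ∃ u ∈ F v, ∃ w ∈ F v, c u ≠ c w := by
  simp [goodColorings]

/-- Among the colorings good on `T`, at most a fraction `r ^ (-|E|)` gives all of `E` the color of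
the vertex `y`, if `E` avoids `T` and `y`: recoloring `E` arbitrarily keeps goodness on `T`, and the
original coloring can be recovered from the color of `y`. -/
lemma card_mono_mul_le_s16 [Fintype V] (F : V → Finset V) (r : ℕ) (T E : Finset V) (y : V)
    (hy : y ∉ E) (hTE : Disjoint T E) (A : Finset (V → Fin r))
    (hA : A ⊆ goodColorings F r T) (hmono : ∀ c ∈ A, ∀ u ∈ E, c u = c y) :
    A.card * r ^ E.card ≤ (goodColorings F r T).card := by
  classical
  have hcard : (A ×ˢ (Finset.univ : Finset (E → Fin r))).card = A.card * r ^ E.card := by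
    simp [Finset.card_product]
  rw [← hcard]
  refine Finset.card_le_card_of_injOn
    (fun p u => if h : u ∈ E then p.2 ⟨u, h⟩ else p.1 u) ?_ ?_
  · rintro ⟨c, g⟩ hp
    have hc : c ∈ A := by simpa using hp
    rw [Finset.mem_coe, mem_goodColorings]
    intro v hv
    obtain ⟨u, hu, w, hw, huw⟩ := mem_goodColorings.1 (hA hc) v hv
    have hu' := Finset.disjoint_left.1 hTE (hv hu)
    have hw' := Finset.disjoint_left.1 hTE (hv hw)
    exact ⟨u, hu, w, hw, by simpa [hu', hw'] using huw⟩
  · rintro ⟨c, g⟩ hp ⟨c', g'⟩ hp' h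
    have hc : c ∈ A := by simpa using hp
    have hc' : c' ∈ A := by simpa using hp'
    have hout : ∀ u, u ∉ E → c u = c' u := by
      intro u hu
      simpa [hu] using congrFun h u
    have h1 : c = c' := by
      funext u
      by_cases hu : u ∈ E
      · rw [hmono c hc u hu, hmono c' hc' u hu, hout y hy]
      · exact hout u hu
    have h2 : g = g' := by
      funext u
      simpa [u.2] using congrFun h u
    rw [h1, h2]

/-- The induction step of the count: adding one vertex to `S` keeps at least a fraction
`1 - 1/(2k)` of the good colorings. -/
lemma card_insert_ge [Fintype V] [DecidableEq V] (F : V → Finset V) (r k D : ℕ) (hk : 1 ≤ k)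
    (hkD : k ≤ D)
    (hF : ∀ v, (F v).card = k + 1) (hD : ∀ x, (Finset.univ.filter fun v => x ∈ F v).card ≤ D)
    (hr : 4 * D ^ 2 ≤ r ^ k) (S : Finset V) (x : V) (hx : x ∉ S)
    (ih : ∀ T ⊆ S, (1 - 1 / (2 * k) : ℝ) ^ (S \ T).card * (goodColorings F r T).card ≤
      (goodColorings F r S).card) :
    (1 - 1 / (2 * k) : ℝ) * (goodColorings F r S).card ≤
      (goodColorings F r (insert x S)).card := by
  have hk' : (1 : ℝ) ≤ k := by exact_mod_cast hk
  have hkD' : (k : ℝ) ≤ D := by exact_mod_cast hkD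
  have hr' : 4 * (D : ℝ) ^ 2 ≤ (r : ℝ) ^ k := by exact_mod_cast hr
  have hq : (1 / 2 : ℝ) ≤ (1 - 1 / (2 * k) : ℝ) ^ (k - 1) := by
    have hB := one_add_mul_le_pow (a := (-(1 / (2 * k)) : ℝ)) (by
      have : (1 / (2 * k) : ℝ) ≤ 1 := by
        rw [div_le_one (by positivity)]; linarith
      linarith) (k - 1)
    rw [Nat.cast_sub hk, Nat.cast_one, ← sub_eq_add_neg] at hB
    refine le_trans ?_ hB
    field_simp
    linarith
  set B : V → Finset (V → Fin r) := fun v =>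
    (goodColorings F r S).filter fun c => ∀ u ∈ F v, ∀ w ∈ F v, c u = c w with hBdef
  set I : Finset V := Finset.univ.filter fun v => x ∈ F v ∧ F v ⊆ insert x S with hI
  have hcover : goodColorings F r S ⊆ goodColorings F r (insert x S) ∪ I.biUnion B := by
    intro c hc
    by_cases hg : c ∈ goodColorings F r (insert x S)
    · exact Finset.mem_union_left _ hg
    · refine Finset.mem_union_right _ ?_
      rw [mem_goodColorings] at hg
      push Not at hg
      obtain ⟨v, hv, hm⟩ := hg
      have hxv : x ∈ F v := by
        by_contra hxv
        obtain ⟨u, hu, w, hw, huw⟩ :=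
          mem_goodColorings.1 hc v ((Finset.subset_insert_iff_of_notMem hxv).1 hv)
        exact huw (hm u hu w hw)
      exact Finset.mem_biUnion.2 ⟨v, by simp [hI, hxv, hv], by
        simp only [hBdef, Finset.mem_filter]; exact ⟨hc, hm⟩⟩
  have hBv : ∀ v ∈ I, ((B v).card : ℝ) ≤ (goodColorings F r S).card / (2 * (D : ℝ) ^ 2) := by
    intro v hv
    obtain ⟨hxv, hvS⟩ : x ∈ F v ∧ F v ⊆ insert x S := by simpa [hI] using hv
    obtain ⟨y, hy, hyx⟩ : ∃ y ∈ F v, y ≠ x :=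
      Finset.exists_mem_ne (by rw [hF]; omega) x
    have hxE : x ∈ (F v).erase y := Finset.mem_erase.2 ⟨hyx.symm, hxv⟩
    have hEcard : ((F v).erase y).card = k := by
      rw [Finset.card_erase_of_mem hy, hF]; rfl
    have hsub : B v ⊆ goodColorings F r (S \ (F v).erase y) := by
      intro c hc
      have hc := (Finset.mem_filter.1 hc).1
      rw [mem_goodColorings] at hc ⊢
      exact fun w hw => hc w (hw.trans Finset.sdiff_subset)
    have h1 := card_mono_mul_le_s16 F r (S \ (F v).erase y) ((F v).erase y) y
      (Finset.notMem_erase _ _) Finset.sdiff_disjoint (B v) hsub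
      (fun c hc u hu => (Finset.mem_filter.1 hc).2 u (Finset.mem_of_mem_erase hu) y hy)
    rw [hEcard] at h1
    have h1' : ((B v).card : ℝ) * (r : ℝ) ^ k ≤
        (goodColorings F r (S \ (F v).erase y)).card := by exact_mod_cast h1
    have h2 := ih (S \ (F v).erase y) Finset.sdiff_subset
    have h3 : (S \ (S \ (F v).erase y)).card = k - 1 := by
      have : S \ (S \ (F v).erase y) = ((F v).erase y).erase x := by
        ext u
        have := @hvS u
        simp only [Finset.mem_sdiff, Finset.mem_erase, Finset.mem_insert] at this ⊢
        constructor
        · rintro ⟨hu, hu'⟩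
          refine ⟨fun h => hx (h ▸ hu), ?_⟩
          tauto
        · tauto
      rw [this, Finset.card_erase_of_mem hxE, hEcard]
    rw [h3] at h2
    have hN : (0 : ℝ) ≤ (goodColorings F r (S \ (F v).erase y)).card := by positivity
    have h4 : (1 / 2 : ℝ) * (goodColorings F r (S \ (F v).erase y)).card ≤
        (goodColorings F r S).card := (mul_le_mul_of_nonneg_right hq hN).trans h2
    have h5 : ((B v).card : ℝ) * (4 * (D : ℝ) ^ 2) ≤ (B v).card * (r : ℝ) ^ k :=
      mul_le_mul_of_nonneg_left hr' (by positivity)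
    have hDpos : (0 : ℝ) < D := by linarith
    rw [le_div_iff₀ (by positivity)]
    linarith
  have hIcard : (I.card : ℝ) ≤ D := by
    have : I.card ≤ D := (Finset.card_le_card (by
      intro v hv
      simp only [hI, Finset.mem_filter] at hv ⊢
      exact ⟨hv.1, hv.2.1⟩)).trans (hD x)
    exact_mod_cast this
  have hU : ((I.biUnion B).card : ℝ) ≤ (goodColorings F r S).card / (2 * k) := by
    have h1 : ((I.biUnion B).card : ℝ) ≤ ∑ v ∈ I, ((B v).card : ℝ) := by
      exact_mod_cast Finset.card_biUnion_le
    have h2 := Finset.sum_le_card_nsmul I _ _ hBv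
    rw [nsmul_eq_mul] at h2
    have hDpos : (0 : ℝ) < D := by linarith
    have hkpos : (0 : ℝ) < k := by linarith
    calc ((I.biUnion B).card : ℝ) ≤ I.card * ((goodColorings F r S).card / (2 * (D : ℝ) ^ 2)) :=
          h1.trans h2
      _ ≤ D * ((goodColorings F r S).card / (2 * (D : ℝ) ^ 2)) :=
          mul_le_mul_of_nonneg_right hIcard (by positivity)
      _ = (goodColorings F r S).card / (2 * D) := by field_simp
      _ ≤ (goodColorings F r S).card / (2 * k) := by gcongr
  have htot : ((goodColorings F r S).card : ℝ) ≤
      (goodColorings F r (insert x S)).card + (I.biUnion B).card := by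
    exact_mod_cast (Finset.card_le_card hcover).trans (Finset.card_union_le _ _)
  have : (1 - 1 / (2 * k) : ℝ) * (goodColorings F r S).card =
      (goodColorings F r S).card - (goodColorings F r S).card / (2 * k) := by ring
  linarith

lemma pow_mul_card_le [Fintype V] [DecidableEq V] (F : V → Finset V) (r k D : ℕ) (hk : 1 ≤ k)
    (hkD : k ≤ D)
    (hF : ∀ v, (F v).card = k + 1) (hD : ∀ x, (Finset.univ.filter fun v => x ∈ F v).card ≤ D)
    (hr : 4 * D ^ 2 ≤ r ^ k) (S : Finset V) :
    ∀ T ⊆ S, (1 - 1 / (2 * k) : ℝ) ^ (S \ T).card * (goodColorings F r T).card ≤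
      (goodColorings F r S).card := by
  induction S using Finset.strongInduction with
  | H S ih =>
    intro T hT
    rcases hT.eq_or_ssubset with rfl | hss
    · simp
    obtain ⟨x, hxS, hxT⟩ := Finset.exists_of_ssubset hss
    have ih' := ih (S.erase x) (Finset.erase_ssubset hxS)
    have hstep := card_insert_ge F r k D hk hkD hF hD hr (S.erase x) x
      (Finset.notMem_erase _ _) ih'
    rw [Finset.insert_erase hxS] at hstep
    have hT' := ih' T (Finset.subset_erase.2 ⟨hT, hxT⟩)
    have hcard : (S \ T).card = (S.erase x \ T).card + 1 := by
      rw [Finset.erase_sdiff_comm, Finset.card_erase_add_one]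
      exact Finset.mem_sdiff.2 ⟨hxS, hxT⟩
    have hk' : (1 : ℝ) ≤ k := by exact_mod_cast hk
    have hq : (0 : ℝ) ≤ 1 - 1 / (2 * k) := by
      rw [sub_nonneg, div_le_one (by positivity)]; linarith
    rw [hcard, pow_succ', mul_assoc]
    exact (mul_le_mul_of_nonneg_left hT' hq).trans hstep

/-- A family of `(k + 1)`-sets in which each vertex lies in at most `D` members has an `r`-coloring
without monochromatic members, provided `4 D² ≤ r ^ k` and `k ≤ D`. -/
lemma exists_no_mono [Fintype V] [DecidableEq V] (F : V → Finset V) (r k D : ℕ) (hk : 1 ≤ k)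
    (hkD : k ≤ D)
    (hF : ∀ v, (F v).card = k + 1) (hD : ∀ x, (Finset.univ.filter fun v => x ∈ F v).card ≤ D)
    (hr : 4 * D ^ 2 ≤ r ^ k) :
    ∃ c : V → Fin r, ∀ v, ∃ u ∈ F v, ∃ w ∈ F v, c u ≠ c w := by
  have h := pow_mul_card_le F r k D hk hkD hF hD hr Finset.univ ∅ (Finset.empty_subset _)
  have hrpos : 0 < r := by
    rcases Nat.eq_zero_or_pos r with rfl | h0
    · rw [zero_pow (by omega)] at hr
      nlinarith
    · exact h0
  have h0 : 0 < (goodColorings F r ∅).card := by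
    refine Finset.card_pos.2 ⟨fun _ => ⟨0, hrpos⟩, mem_goodColorings.2 fun v hv => ?_⟩
    have := hF v
    rw [Finset.subset_empty.1 hv] at this
    simp at this
  have hk' : (1 : ℝ) ≤ k := by exact_mod_cast hk
  have hq : (0 : ℝ) < 1 - 1 / (2 * k) := by
    rw [sub_pos, div_lt_one (by positivity)]; linarith
  have h0' : (0 : ℝ) < (goodColorings F r ∅).card := by exact_mod_cast h0
  have hpos : (0 : ℝ) < (goodColorings F r Finset.univ).card :=
    lt_of_lt_of_le (mul_pos (pow_pos hq _) h0') h
  obtain ⟨c, hc⟩ := Finset.card_pos.1 (by exact_mod_cast hpos)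
  exact ⟨c, fun v => mem_goodColorings.1 hc v (Finset.subset_univ _)⟩

/-- If `δ(G) ≥ 2`, then `χ₂(G) ≤ ⌈(4Δ²)^(1/(δ−1))⌉ · χ(G)`. -/
theorem stmt16 [Fintype V] (G : SimpleGraph V) (hδ : 2 ≤ minDeg G) :
    dynChromNum G ≤
      ⌈(4 * (maxDeg G : ℝ) ^ 2) ^ ((1 : ℝ) / ((minDeg G : ℝ) - 1))⌉₊ * chromNum G := by
  classical
  have hmin : ∀ v, minDeg G ≤ deg G v := fun v => Nat.sInf_le ⟨v, rfl⟩
  have hmax : ∀ v, deg G v ≤ maxDeg G := fun v =>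
    le_csSup (Set.finite_range (deg G)).bddAbove ⟨v, rfl⟩
  have hdeg : ∀ v, deg G v = (G.neighborFinset v).card := fun v => by
    rw [deg, Set.ncard_eq_toFinset_card', SimpleGraph.neighborFinset]
  -- On the empty graph `minDeg` takes the junk value `0`, so `V` has a vertex.
  obtain ⟨v₀⟩ : Nonempty V := by
    by_contra hV
    rw [not_nonempty_iff] at hV
    have : minDeg G = 0 := by simp [minDeg]
    omega
  obtain ⟨k, hk⟩ : ∃ k, minDeg G = k + 1 := ⟨minDeg G - 1, by omega⟩
  have hk1 : 1 ≤ k := by omega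
  have hkD : k ≤ maxDeg G := by have := hmin v₀; have := hmax v₀; omega
  have hexp : ((minDeg G : ℝ) - 1) = k := by rw [hk]; push_cast; ring
  rw [hexp]
  set r := ⌈(4 * (maxDeg G : ℝ) ^ 2) ^ ((1 : ℝ) / (k : ℝ))⌉₊ with hrdef
  have hr : 4 * maxDeg G ^ 2 ≤ r ^ k := by
    have h1 : (4 * (maxDeg G : ℝ) ^ 2) ^ ((1 : ℝ) / (k : ℝ)) ≤ r := Nat.le_ceil _
    have h2 := pow_le_pow_left₀ (by positivity) h1 k
    rw [one_div, Real.rpow_inv_natCast_pow (by positivity) (by omega)] at h2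
    exact_mod_cast h2
  have hFex : ∀ v, ∃ s ⊆ G.neighborFinset v, s.card = k + 1 := fun v =>
    Finset.exists_subset_card_eq (by rw [← hdeg, ← hk]; exact hmin v)
  choose F hFsub hFcard using hFex
  obtain ⟨c, hc⟩ := exists_no_mono F r k (maxDeg G) hk1 hkD hFcard (fun x => by
    refine le_trans (Finset.card_le_card ?_) ((hdeg x).symm.le.trans (hmax x))
    intro v hv
    have := hFsub v (Finset.mem_filter.1 hv).2
    rw [SimpleGraph.mem_neighborFinset] at this ⊢
    exact this.symm) hr
  obtain ⟨f⟩ : G.Colorable (chromNum G) :=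
    Nat.sInf_mem (s := {n | G.Colorable n}) ⟨_, G.colorable_of_fintype⟩
  refine Nat.sInf_le ⟨fun v => finProdFinEquiv (c v, f v), ?_, ?_⟩
  · intro u v huv h
    exact f.valid huv (Prod.ext_iff.1 (finProdFinEquiv.injective h)).2
  · intro v _
    obtain ⟨u, hu, w, hw, huw⟩ := hc v
    refine ⟨u, w, by simpa using hFsub v hu, by simpa using hFsub v hw, fun h => ?_⟩
    exact huw (Prod.ext_iff.1 (finProdFinEquiv.injective h)).1
end

section
/- There exists a natural number δ₀ such that every bipartite finite simple graph G with minimum degree δ(G) ≥ δ₀ satisfies χ₂(G) − χ(G) ≤ 2·⌈Δ(G)/δ(G)⌉. -/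
/-!
If the neighborhoods of `G` can be made non-monochromatic by a coloring `f` with
`c = ⌈Δ/δ⌉ + 1` colors (not necessarily proper), then pairing `f` with the bipartition gives a
dynamic coloring with `2c = 2 + 2⌈Δ/δ⌉` colors, and `χ(G) ≥ 2` because `G` has an edge.

Such an `f` exists by the symmetric Lovász local lemma. Shrink each neighborhood to a set of exactly
`δ` vertices; each such set is monochromatic under a uniformly random `f` with probability
`c ^ (1 - δ)`, and meets at most `δΔ ≤ d = δ²⌈Δ/δ⌉` of these sets. The condition
`4 d ≤ c ^ (δ - 1)` holds as soon as `δ ≥ 12`. The local lemma is proved by counting colorings: `mono_indep` is the independence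
of a set from the sets disjoint from it, `local_bound` is the inductive bound on conditional
probabilities, and `exists_good` the resulting existence statement.
-/

open SimpleGraph

variable {V : Type*}

/-- All vertices of `s` receive the same color under `f`. -/
def Mono {W : Type} {c : ℕ} (f : W → Fin c) (s : Finset W) : Prop :=
  ∀ x ∈ s, ∀ y ∈ s, f x = f y

open Classical in
/-- The colorings for which no hyperedge `e i` with `i ∈ S` is monochromatic. -/
noncomputable def good {W ι : Type} [Fintype W] (c : ℕ) (e : ι → Finset W) (S : Finset ι) :
    Finset (W → Fin c) :=
  Finset.univ.filter fun f => ∀ i ∈ S, ¬ Mono f (e i)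

open Classical in
/-- The colorings in `good c e S` for which `e j` is monochromatic. -/
noncomputable def bad {W ι : Type} [Fintype W] (c : ℕ) (e : ι → Finset W) (S : Finset ι) (j : ι) :
    Finset (W → Fin c) :=
  (good c e S).filter fun f => Mono f (e j)

open Classical in
/-- Being monochromatic on `e j` has conditional probability at most `c ^ (1 - k)` given an event
that depends only on the colors outside `e j`: recoloring all but one vertex of `e j` arbitrarily
preserves the event, and the original coloring can be recovered from the result. -/
lemma mono_indep {W ι : Type} [Fintype W] {c k : ℕ} (e : ι → Finset W) (S : Finset ι) (j : ι)
    (hk : (e j).card = k) (hk0 : 0 < k) (hS : ∀ i ∈ S, Disjoint (e i) (e j)) :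
    (bad c e S j).card * c ^ (k - 1) ≤ (good c e S).card := by
  obtain ⟨a, ha⟩ : (e j).Nonempty := Finset.card_pos.mp (hk ▸ hk0)
  have hcard : Fintype.card ((e j).erase a → Fin c) = c ^ (k - 1) := by
    rw [Fintype.card_fun, Fintype.card_fin, Fintype.card_coe, Finset.card_erase_of_mem ha, hk]
  rw [← hcard, ← Finset.card_univ, ← Finset.card_product]
  refine Finset.card_le_card_of_injOn
    (fun p x => if h : x ∈ (e j).erase a then p.2 ⟨x, h⟩ else p.1 x) ?_ ?_
  · rintro ⟨f, g⟩ hp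
    simp only [bad, good, Finset.coe_product, Set.mem_prod, Finset.mem_coe, Finset.mem_filter,
      Finset.mem_univ, true_and, and_true] at hp ⊢
    intro i hi hm
    refine hp.1 i hi fun x hx y hy => ?_
    have key : ∀ z ∈ e i, z ∉ (e j).erase a := fun z hz h =>
      Finset.disjoint_left.mp (hS i hi) hz (Finset.mem_of_mem_erase h)
    have hxy := hm x hx y hy
    beta_reduce at hxy
    rwa [dif_neg (key x hx), dif_neg (key y hy)] at hxy
  · rintro ⟨f, g⟩ hp ⟨f', g'⟩ hp' h
    simp only [bad, good, Finset.coe_product, Set.mem_prod, Finset.mem_coe, Finset.mem_filter,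
      Finset.mem_univ, true_and, and_true] at hp hp'
    have hx := fun x => congrFun h x
    simp only at hx
    have hout : ∀ x, x ∉ (e j).erase a → f x = f' x := fun x hn => by
      have hxx := hx x
      rwa [dif_neg hn, dif_neg hn] at hxx
    have hfa : f a = f' a := hout a (by simp)
    refine Prod.ext (funext fun x => ?_) (funext fun x => ?_)
    · by_cases hn : x ∈ (e j).erase a
      · have hxe := Finset.mem_of_mem_erase hn
        exact (hp.2 x hxe a ha).trans (hfa.trans (hp'.2 a ha x hxe))
      · exact hout x hn
    · have := hx x
      rwa [dif_pos x.2, dif_pos x.2] at this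

open Classical in
/-- The inductive step of the local lemma: conditioned on no `e i`, `i ∈ S`, being monochromatic,
`e j` is monochromatic with probability at most `1 / (2 d)`. -/
lemma local_bound {W ι : Type} [Fintype W] [Fintype ι] {c k d : ℕ} (e : ι → Finset W)
    (hk : ∀ i, (e i).card = k) (hk0 : 0 < k)
    (hd : ∀ j, (Finset.univ.filter fun i => ¬ Disjoint (e i) (e j)).card ≤ d)
    (hcd : 4 * d ≤ c ^ (k - 1)) (S : Finset ι) :
    ∀ j, 2 * d * (bad c e S j).card ≤ (good c e S).card := by
  induction S using Finset.strongInduction with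
  | H S ih =>
  intro j
  -- `T` is the part of `S` independent of `e j`, and `U` the part that meets `e j`.
  set T := S.filter fun i => Disjoint (e i) (e j) with hT
  set U := S.filter fun i => ¬ Disjoint (e i) (e j) with hU
  have h1 : (bad c e T j).card * (4 * d) ≤ (good c e T).card :=
    (Nat.mul_le_mul_left _ hcd).trans
      (mono_indep e T j (hk j) hk0 fun i hi => (Finset.mem_filter.mp hi).2)
  have h2 : (bad c e S j).card ≤ (bad c e T j).card := by
    refine Finset.card_le_card fun f hf => ?_
    simp only [bad, good, Finset.mem_filter, Finset.mem_univ, true_and] at hf ⊢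
    exact ⟨fun i hi => hf.1 i (Finset.mem_filter.mp hi).1, hf.2⟩
  -- At least half of `good T` survives in `good S`.
  have h3 : (good c e T).card ≤ 2 * (good c e S).card := by
    rcases U.eq_empty_or_nonempty with hUe | ⟨u, hu⟩
    · have hTS : T = S := by
        refine Finset.filter_true_of_mem fun i hi => ?_
        by_contra hn
        have : i ∈ U := Finset.mem_filter.mpr ⟨hi, hn⟩
        simp [hUe] at this
      rw [hTS]; omega
    · have hss : T ⊂ S := by
        refine Finset.filter_ssubset.mpr ⟨u, (Finset.mem_filter.mp hu).1, (Finset.mem_filter.mp hu).2⟩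
      have hUd : U.card ≤ d :=
        (Finset.card_le_card (Finset.filter_subset_filter _ (Finset.subset_univ S))).trans (hd j)
      have hd0 : 0 < d := (Finset.card_pos.mpr ⟨u, hu⟩).trans_le hUd
      have hcov : good c e T ⊆ good c e S ∪ U.biUnion fun i => bad c e T i := by
        intro f hf
        by_cases hm : ∃ i ∈ U, Mono f (e i)
        · obtain ⟨i, hi, hm⟩ := hm
          exact Finset.mem_union_right _
            (Finset.mem_biUnion.mpr ⟨i, hi, Finset.mem_filter.mpr ⟨hf, hm⟩⟩)
        · push Not at hm
          refine Finset.mem_union_left _ ?_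
          simp only [good, Finset.mem_filter, Finset.mem_univ, true_and] at hf ⊢
          intro i hi
          by_cases hdj : Disjoint (e i) (e j)
          · exact hf i (Finset.mem_filter.mpr ⟨hi, hdj⟩)
          · exact hm i (Finset.mem_filter.mpr ⟨hi, hdj⟩)
      have hc1 := (Finset.card_le_card hcov).trans (Finset.card_union_le _ _)
      have hc2 : (U.biUnion fun i => bad c e T i).card ≤ ∑ i ∈ U, (bad c e T i).card :=
        Finset.card_biUnion_le
      have hc3 : 2 * d * ∑ i ∈ U, (bad c e T i).card ≤ d * (good c e T).card := by
        rw [Finset.mul_sum]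
        refine (Finset.sum_le_card_nsmul U _ _ fun i _ => ih T hss i).trans ?_
        rw [smul_eq_mul]
        exact Nat.mul_le_mul_right _ hUd
      have hc4 : 2 * ∑ i ∈ U, (bad c e T i).card ≤ (good c e T).card := by
        refine Nat.le_of_mul_le_mul_left ?_ hd0
        calc _ = 2 * d * ∑ i ∈ U, (bad c e T i).card := by ring
          _ ≤ _ := hc3
      omega
  have h4 : 4 * d * (bad c e S j).card ≤ 4 * d * (bad c e T j).card := Nat.mul_le_mul_left _ h2
  nlinarith

open Classical in
/-- The symmetric local lemma for hypergraph coloring: a `k`-uniform hypergraph in which every edge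
meets at most `d` edges (itself included) has a `c`-coloring without monochromatic edges, provided
`4 d ≤ c ^ (k - 1)`. -/
lemma exists_good_s17 {W ι : Type} [Fintype W] [Fintype ι] {c k d : ℕ} (e : ι → Finset W)
    (hk : ∀ i, (e i).card = k) (hk0 : 0 < k) (hc : 0 < c) (hd0 : 0 < d)
    (hd : ∀ j, (Finset.univ.filter fun i => ¬ Disjoint (e i) (e j)).card ≤ d)
    (hcd : 4 * d ≤ c ^ (k - 1)) :
    ∃ f : W → Fin c, ∀ i, ¬ Mono f (e i) := by
  have main : ∀ S : Finset ι, 0 < (good c e S).card := by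
    intro S
    induction S using Finset.induction_on with
    | empty => exact Finset.card_pos.mpr ⟨fun _ => ⟨0, hc⟩, by simp [good]⟩
    | insert a S _ ih =>
      have hb := local_bound e hk hk0 hd hcd S a
      have hsplit : (good c e S).card = (bad c e S a).card + (good c e (insert a S)).card := by
        rw [bad, ← Finset.card_filter_add_card_filter_not (s := good c e S) (fun f => Mono f (e a))]
        congr 2
        ext f
        simp only [good, Finset.mem_filter, Finset.mem_univ, true_and, Finset.mem_insert,
          forall_eq_or_imp]
        tauto
      have : 2 * (bad c e S a).card ≤ 2 * d * (bad c e S a).card :=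
        Nat.mul_le_mul_right _ (by omega)
      omega
  obtain ⟨f, hf⟩ := Finset.card_pos.mp (main Finset.univ)
  simp only [good, Finset.mem_filter, Finset.mem_univ, true_and, forall_const] at hf
  exact ⟨f, hf⟩

lemma four_sq_le_two_pow (n : ℕ) (hn : 12 ≤ n) : 4 * n ^ 2 ≤ 2 ^ (n - 2) := by
  induction n, hn using Nat.le_induction with
  | base => norm_num
  | succ n hn ih =>
    rw [show n + 1 - 2 = (n - 2) + 1 by omega, pow_succ 2]
    nlinarith

lemma numeric_bound (n r : ℕ) (hn : 12 ≤ n) (hr : 1 ≤ r) :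
    4 * (n * (n * r)) ≤ (r + 1) ^ (n - 1) := by
  rw [show n - 1 = (n - 2) + 1 by omega, pow_succ]
  have h1 := four_sq_le_two_pow n hn
  have h2 : 2 ^ (n - 2) ≤ (r + 1) ^ (n - 2) := Nat.pow_le_pow_left (by omega) _
  calc 4 * (n * (n * r)) = 4 * n ^ 2 * r := by ring
    _ ≤ (r + 1) ^ (n - 2) * (r + 1) := Nat.mul_le_mul (h1.trans h2) (by omega)

lemma minDeg_le {V : Type} (G : SimpleGraph V) (v : V) : minDeg G ≤ deg G v :=
  Nat.sInf_le ⟨v, rfl⟩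

lemma le_maxDeg {V : Type} [Fintype V] (G : SimpleGraph V) (v : V) : deg G v ≤ maxDeg G :=
  le_csSup (Set.finite_range (deg G)).bddAbove ⟨v, rfl⟩

open Classical in
lemma deg_eq {V : Type} [Fintype V] (G : SimpleGraph V) (v : V) :
    deg G v = (G.neighborFinset v).card := by
  rw [deg, Set.ncard_eq_toFinset_card', neighborFinset]

open Classical in
/-- If `12 ≤ δ` and `Δ ≤ δ r` then some `(r + 1)`-coloring, not necessarily proper, makes every
neighborhood non-monochromatic. -/
lemma exists_coloring {V : Type} [Fintype V] (G : SimpleGraph V) (r : ℕ) (hr : 1 ≤ r)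
    (hδ : 12 ≤ minDeg G) (hΔ : maxDeg G ≤ minDeg G * r) :
    ∃ f : V → Fin (r + 1), ∀ v, ∃ u w, G.Adj v u ∧ G.Adj v w ∧ f u ≠ f w := by
  have hsub : ∀ v, ∃ t ⊆ G.neighborFinset v, t.card = minDeg G := fun v =>
    Finset.exists_subset_card_eq ((minDeg_le G v).trans (deg_eq G v).le)
  choose e he hcard using hsub
  have hmeet : ∀ j, (Finset.univ.filter fun i => ¬ Disjoint (e i) (e j)).card
      ≤ minDeg G * (minDeg G * r) := by
    intro j
    -- A vertex `i` whose set meets `e j` is a neighbor of an element of `e j`.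
    have hcov : (Finset.univ.filter fun i => ¬ Disjoint (e i) (e j)) ⊆
        (e j).biUnion fun x => G.neighborFinset x := by
      intro i hi
      obtain ⟨x, hx, hxj⟩ := Finset.not_disjoint_iff.mp (Finset.mem_filter.mp hi).2
      refine Finset.mem_biUnion.mpr ⟨x, hxj, ?_⟩
      have := he i hx
      rw [mem_neighborFinset] at this ⊢
      exact this.symm
    refine (Finset.card_le_card hcov).trans ?_
    refine (Finset.card_biUnion_le_card_mul _ _ (minDeg G * r) fun x _ => ?_).trans_eq ?_
    · exact (deg_eq G x).symm.le.trans ((le_maxDeg G x).trans hΔ)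
    · rw [hcard]
  obtain ⟨f, hf⟩ := exists_good_s17 (c := r + 1) e hcard (by omega) (by omega) (by positivity)
    hmeet (numeric_bound _ r hδ hr)
  refine ⟨f, fun v => ?_⟩
  have := hf v
  simp only [Mono] at this
  push Not at this
  obtain ⟨u, hu, w, hw, huw⟩ := this
  exact ⟨u, w, by simpa using he v hu, by simpa using he v hw, huw⟩

/-- There is `δ₀` such that every bipartite graph `G` with `δ(G) ≥ δ₀` satisfies
`χ₂(G) − χ(G) ≤ 2⌈Δ(G)/δ(G)⌉`. -/
theorem stmt17 :
    ∃ δ₀ : ℕ, ∀ (V : Type) [Fintype V] (G : SimpleGraph V),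
      G.Colorable 2 → δ₀ ≤ minDeg G →
      dynChromNum G - chromNum G ≤ 2 * ⌈(maxDeg G : ℝ) / (minDeg G : ℝ)⌉₊ := by
  refine ⟨12, fun V _ G hbip hδ => ?_⟩
  set r := ⌈(maxDeg G : ℝ) / (minDeg G : ℝ)⌉₊ with hr
  -- `minDeg` is `0` on the empty type, so `V` is nonempty.
  obtain ⟨v₀⟩ : Nonempty V := by
    by_contra hne
    rw [not_nonempty_iff] at hne
    simp [minDeg] at hδ
  have hδ0 : (0 : ℝ) < minDeg G := by exact_mod_cast (by omega : 0 < minDeg G)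
  have hΔ : maxDeg G ≤ minDeg G * r := by
    have := (div_le_iff₀' hδ0).mp (Nat.le_ceil ((maxDeg G : ℝ) / (minDeg G : ℝ)))
    exact_mod_cast this
  have hr1 : 1 ≤ r := by
    have h := (minDeg_le G v₀).trans ((le_maxDeg G v₀).trans hΔ)
    by_contra hn
    have h0 : r = 0 := by omega
    rw [h0] at h
    omega
  obtain ⟨f, hf⟩ := exists_coloring G r hr1 hδ hΔ
  obtain ⟨b⟩ := hbip
  have hdyn : dynChromNum G ≤ 2 * (r + 1) := by
    refine Nat.sInf_le ⟨fun v => finProdFinEquiv (b v, f v), ?_, fun v _ => ?_⟩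
    · intro u v huv h
      exact b.valid huv (Prod.ext_iff.mp (finProdFinEquiv.injective h)).1
    · obtain ⟨u, w, hu, hw, huw⟩ := hf v
      exact ⟨u, w, hu, hw, fun h => huw (Prod.ext_iff.mp (finProdFinEquiv.injective h)).2⟩
  have hchi : 2 ≤ chromNum G := by
    have hmem : G.Colorable (chromNum G) := Nat.sInf_mem (s := {n | G.Colorable n}) ⟨2, ⟨b⟩⟩
    obtain ⟨C⟩ := hmem
    obtain ⟨u, -, hu, -⟩ := hf v₀
    have hne := C.valid hu
    by_contra hlt
    have h1 := (C v₀).2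
    have h2 := (C u).2
    exact hne (Fin.ext (by omega))
  omega
end

section
/- If G is an r-regular finite simple graph on n vertices with r > n/2, then χ₂(G) = χ(G). -/
/-!
Every proper coloring of `G` is already dynamic, so both infima are over the same set. Given a
vertex `v` and a neighbor `u`, the neighborhoods of `u` and `v` have `2r > n` elements in total,
hence share a vertex `w`; then `u` and `w` are adjacent neighbors of `v`, so a proper coloring
gives them different colors.
-/

open SimpleGraph

variable {V : Type*}

/-- Two neighborhoods too large to be disjoint share a vertex. -/
theorem exists_common_neighbor [Fintype V] (G : SimpleGraph V) (u v : V)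
    (h : Fintype.card V < deg G u + deg G v) : ∃ w, G.Adj u w ∧ G.Adj v w := by
  by_contra hne
  have hdisj : Disjoint (G.neighborSet u) (G.neighborSet v) :=
    Set.disjoint_left.2 fun w hu hv => hne ⟨w, hu, hv⟩
  have hunion := Set.ncard_union_eq hdisj (Set.toFinite _) (Set.toFinite _)
  have hle := Set.ncard_le_card (G.neighborSet u ∪ G.neighborSet v)
  rw [Nat.card_eq_fintype_card] at hle
  unfold deg at h
  omega

/-- If `G` is `r`-regular on `n` vertices with `r > n/2`, then `χ₂(G) = χ(G)`. -/
theorem stmt18 [Fintype V] (G : SimpleGraph V) (r : ℕ) (hreg : ∀ v, deg G v = r)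
    (hr : (Fintype.card V : ℝ) / 2 < (r : ℝ)) :
    dynChromNum G = chromNum G := by
  have hcard : Fintype.card V < 2 * r := by
    have h : (Fintype.card V : ℝ) < 2 * r := by linarith
    exact_mod_cast h
  unfold dynChromNum chromNum
  congr 1
  ext k
  constructor
  · rintro ⟨c, hc, -⟩
    exact ⟨SimpleGraph.Coloring.mk c fun {u v} h => hc h⟩
  · rintro ⟨c⟩
    refine ⟨c, fun u v h => c.valid h, fun v hv => ?_⟩
    obtain ⟨u, hu⟩ : (G.neighborSet v).Nonempty := by
      apply Set.nonempty_of_ncard_ne_zero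
      unfold deg at hv
      omega
    obtain ⟨w, hvw, huw⟩ :=
      exists_common_neighbor G v u (by rw [hreg, hreg]; omega)
    exact ⟨u, w, hu, hvw, c.valid huw⟩
end
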